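/- arXiv:2112.11794 — 2 statements merged into one kernel-verified Lean document; each statement's English description precedes it below -/
import Mathlib

section
/- Let f and g be symmetric simple-loop symbols of class SL^α with α ≥ 2, and for each n set h = 1/(n+1) (so that f + h·g is again a symmetric simple-loop symbol for every n). Then there exist a constant C > 0 and N ∈ ℕ such that for all n ≥ N and all s ∈ (0,π): |η_{f+h·g}(s) − η_f(s) − ψ(s)·h| ≤ C h². -/
open MeasureTheory Filter Real Topology

noncomputable section

/-- The `k`-th Fourier coefficient of a (2π-periodic) function `u : ℝ → ℝ`. -/
def fCoeff (u : ℝ → ℝ) (k : ℤ) : ℂ :=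
  (1 / (2 * (π : ℂ))) * ∫ θ in (0:ℝ)..(2*π), (u θ : ℂ) * Complex.exp (-Complex.I * (k : ℂ) * (θ : ℂ))

/-- The `n × n` Toeplitz matrix generated by `u`. -/
def toeplitz (u : ℝ → ℝ) (n : ℕ) : Matrix (Fin n) (Fin n) ℂ :=
  Matrix.of fun i j => fCoeff u ((i : ℤ) - (j : ℤ))

/-- The eigenvalues of a Hermitian matrix, arranged in nondecreasing order. -/
def sortedEigs {n : ℕ} {A : Matrix (Fin n) (Fin n) ℂ} (hA : A.IsHermitian) : Fin n → ℝ :=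
  hA.eigenvalues ∘ Tuple.sort hA.eigenvalues

/-- Cauchy principal value of `∫_0^{2π} u`, where `u` is singular (only) at `s` and `2π - s`. -/
def pvIntegral2 (u : ℝ → ℝ) (s : ℝ) : ℝ :=
  limUnder (𝓝[>] (0:ℝ)) fun ε =>
    ∫ σ in Set.Icc (0:ℝ) (2*π) \ (Set.Ioo (s-ε) (s+ε) ∪ Set.Ioo (2*π-s-ε) (2*π-s+ε)), u σ

/-- The function `b_f(σ,s) = (f(σ) - f(s))/(2(cos s - cos σ))`, extended by continuity to the
points where `cos σ = cos s`. -/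
def bSymb (f : ℝ → ℝ) (σ s : ℝ) : ℝ :=
  if Real.cos σ = Real.cos s then
    limUnder (𝓝[≠] σ) fun τ => (f τ - f s) / (2 * (Real.cos s - Real.cos τ))
  else (f σ - f s) / (2 * (Real.cos s - Real.cos σ))

/-- The function `η_f`. -/
def etaF (f : ℝ → ℝ) (s : ℝ) : ℝ :=
  (Real.sin s / (2*π)) *
    pvIntegral2 (fun σ => Real.log (bSymb f σ s) / (Real.cos s - Real.cos σ)) s

/-- The function `ψ` associated with symbols `f` and `g`. -/
def psiF (f g : ℝ → ℝ) (s : ℝ) : ℝ :=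
  (Real.sin s / (2*π)) *
    pvIntegral2 (fun σ => bSymb g σ s / (bSymb f σ s * (Real.cos s - Real.cos σ))) s

/-- The function `φ` associated with symbols `f` and `g`. -/
def phiF (f g : ℝ → ℝ) (s : ℝ) : ℝ :=
  (Real.sin s / (2*π)) *
    pvIntegral2
      (fun σ => bSymb g σ s / ((bSymb f σ s + bSymb g σ s) * (Real.cos s - Real.cos σ))) s

/-- A symmetric simple-loop symbol of class `SL^α`. -/
structure IsSimpleLoop (α : ℝ) (f : ℝ → ℝ) : Prop where
  periodic : Function.Periodic f (2*π)
  smooth : ContDiff ℝ 2 f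
  wiener : Summable fun k : ℤ => ‖fCoeff f k‖ * ((k.natAbs : ℝ) + 1) ^ α
  symm : ∀ s, f (2*π - s) = f s
  f_zero : f 0 = 0
  deriv_zero : deriv f 0 = 0
  deriv2_zero : 0 < deriv (deriv f) 0
  deriv_pos : ∀ σ ∈ Set.Ioo (0:ℝ) π, 0 < deriv f σ
  deriv_pi : deriv f π = 0
  deriv2_pi : deriv (deriv f) π < 0
  f_pi : 0 < f π

end

/-!
Put `c = q s`. Since the principal value of `∫ dσ / (cos s - cos σ)` vanishes, the principal value
of `∫ q σ / (cos s - cos σ) dσ` is the absolutely convergent integral of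
`(q σ - c) / (cos s - cos σ)`, and it is linear in `q`. If
`|q σ - c| (sin² σ + sin² s) ≤ C |cos s - cos σ|`, then `sin s` times this integral is `O(C)`
uniformly in `s`, because `∫ sin s / (sin² σ + sin² s) dσ` is bounded. By the mean value theorem the
symbol quotients `b_f` and `b_g` satisfy such an estimate with `C` independent of `s`. Hence so do
`log b_f`, `x = b_g / b_f` and, with a constant that is `O(h²)`, the remainder
`log (1 + h x) - h x` of `log (b_f + h b_g) = log b_f + h x + (log (1 + h x) - h x)`.
-/

section Cosine

open Set

theorem exists_sub_mul_sin_eq {u u' : ℝ → ℝ} {a b : ℝ} (hab : a ≠ b)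
    (hu : ∀ x ∈ uIcc a b, HasDerivAt u (u' x) x) :
    ∃ z ∈ uIoo a b, (u b - u a) * sin z = (cos a - cos b) * u' z := by
  wlog h : a < b generalizing a b
  · obtain ⟨z, hz, hzu⟩ := this hab.symm (by rwa [uIcc_comm]) (hab.lt_or_gt.resolve_left h)
    exact ⟨z, uIoo_comm a b ▸ hz, by linarith⟩
  rw [uIcc_of_le h.le] at hu
  rw [uIoo_of_lt h]
  obtain ⟨z, hz, hzu⟩ := exists_ratio_hasDerivAt_eq_ratio_slope u u' h
    (fun x hx => (hu x hx).continuousAt.continuousWithinAt)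
    (fun x hx => hu x (Ioo_subset_Icc_self hx)) cos (fun x => -sin x) continuous_cos.continuousOn
    (fun x _ => hasDerivAt_cos x)
  exact ⟨z, hz, by linarith⟩

theorem abs_cos_sub_cos_le_of_mem_uIoo {a b z : ℝ} (ha : a ∈ Icc 0 π) (hb : b ∈ Icc 0 π)
    (hz : z ∈ uIoo a b) : |cos a - cos z| ≤ |cos a - cos b| := by
  have hanti : AntitoneOn cos (uIcc a b) :=
    antitoneOn_cos.mono (ordConnected_Icc.uIcc_subset ha hb)
  rw [abs_sub_comm, abs_sub_comm (cos a)]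
  exact abs_sub_left_of_mem_uIcc (hanti.mapsTo_uIcc (uIoo_subset_uIcc_self hz))

theorem sin_sq_le_sin_sq_add (a b : ℝ) : sin a ^ 2 ≤ sin b ^ 2 + 2 * |cos a - cos b| := by
  have hsum : |cos b + cos a| ≤ 2 := by
    linarith [abs_add_le (cos b) (cos a), abs_cos_le_one a, abs_cos_le_one b]
  calc sin a ^ 2 = sin b ^ 2 + (cos b + cos a) * (cos b - cos a) := by
        rw [sin_sq, sin_sq]; ring
    _ ≤ sin b ^ 2 + |cos b + cos a| * |cos a - cos b| := by
        rw [abs_sub_comm (cos a), ← abs_mul]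
        gcongr
        exact le_abs_self _
    _ ≤ sin b ^ 2 + 2 * |cos a - cos b| := by gcongr

theorem cos_sub_cos_eq_two_mul_sin_mul_sin (s σ : ℝ) :
    cos s - cos σ = 2 * sin ((σ + s) / 2) * sin ((σ - s) / 2) := by
  rw [cos_sub_cos, show (s - σ) / 2 = -((σ - s) / 2) by ring, sin_neg, add_comm s σ]
  ring

theorem eq_or_eq_two_pi_sub_of_cos_eq {s σ : ℝ} (hs : s ∈ Icc 0 π) (hσ : σ ∈ Icc 0 (2 * π))
    (h : cos σ = cos s) : σ = s ∨ σ = 2 * π - s := by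
  rcases le_total σ π with hσπ | hσπ
  · exact Or.inl (injOn_cos ⟨hσ.1, hσπ⟩ hs h)
  · right
    have := injOn_cos ⟨by linarith [hσ.2], by linarith⟩ hs ((cos_two_pi_sub σ).trans h)
    linarith

theorem continuous_inv_sin_sq_add_sq {a : ℝ} (ha : a ≠ 0) :
    Continuous fun σ : ℝ => (sin σ ^ 2 + a ^ 2)⁻¹ :=
  Continuous.inv₀ (by fun_prop) fun σ => by positivity

theorem inv_sin_sq_add_sq_le {a σ : ℝ} (ha : a ≠ 0) (hσ : |σ| ≤ π / 2) :
    (sin σ ^ 2 + a ^ 2)⁻¹ ≤ (a ^ 2)⁻¹ * (1 + (2 / (π * a) * σ) ^ 2)⁻¹ := by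
  have hjordan : (2 / π * σ) ^ 2 ≤ sin σ ^ 2 := by
    rw [sq_le_sq, abs_mul, abs_of_pos (by positivity : 0 < 2 / π)]
    exact mul_abs_le_abs_sin hσ
  rw [← mul_inv]
  refine inv_anti₀ (by positivity) ?_
  calc a ^ 2 * (1 + (2 / (π * a) * σ) ^ 2) = (2 / π * σ) ^ 2 + a ^ 2 := by field_simp; ring
    _ ≤ sin σ ^ 2 + a ^ 2 := by gcongr

theorem integral_inv_sin_sq_add_sq_half_period_le {a : ℝ} (ha : 0 < a) :
    ∫ σ in (-(π / 2))..(π / 2), (sin σ ^ 2 + a ^ 2)⁻¹ ≤ π ^ 2 / (2 * a) := by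
  have hcauchy : Continuous fun σ : ℝ => (a ^ 2)⁻¹ * (1 + (2 / (π * a) * σ) ^ 2)⁻¹ :=
    continuous_const.mul (Continuous.inv₀ (by fun_prop) fun σ => by positivity)
  calc ∫ σ in (-(π / 2))..(π / 2), (sin σ ^ 2 + a ^ 2)⁻¹
      ≤ ∫ σ in (-(π / 2))..(π / 2), (a ^ 2)⁻¹ * (1 + (2 / (π * a) * σ) ^ 2)⁻¹ :=
        intervalIntegral.integral_mono_on (by linarith [pi_pos])
          ((continuous_inv_sin_sq_add_sq ha.ne').intervalIntegrable _ _)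
          (hcauchy.intervalIntegrable _ _) fun σ hσ => inv_sin_sq_add_sq_le ha.ne' (abs_le.2 hσ)
    _ = π / (2 * a) * (arctan (2 / (π * a) * (π / 2)) - arctan (2 / (π * a) * -(π / 2))) := by
        rw [intervalIntegral.integral_const_mul, intervalIntegral.integral_comp_mul_left
          (fun x => (1 + x ^ 2)⁻¹) (by positivity), integral_inv_one_add_sq, smul_eq_mul]
        field_simp
    _ ≤ π / (2 * a) * (π / 2 - -(π / 2)) := by
        gcongr
        · exact (arctan_lt_pi_div_two _).le
        · exact (neg_pi_div_two_lt_arctan _).le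
    _ = π ^ 2 / (2 * a) := by ring

theorem integral_inv_sin_sq_add_sq_le {a : ℝ} (ha : 0 < a) :
    ∫ σ in (0)..(2 * π), (sin σ ^ 2 + a ^ 2)⁻¹ ≤ π ^ 2 / a := by
  have hint (b c : ℝ) : IntervalIntegrable (fun σ => (sin σ ^ 2 + a ^ 2)⁻¹) volume b c :=
    (continuous_inv_sin_sq_add_sq ha.ne').intervalIntegrable b c
  have hper : Function.Periodic (fun σ : ℝ => (sin σ ^ 2 + a ^ 2)⁻¹) π := fun σ => by
    simp only [sin_add_pi, neg_sq]
  have hperiod (t : ℝ) : ∫ σ in t..(t + π), (sin σ ^ 2 + a ^ 2)⁻¹ ≤ π ^ 2 / (2 * a) := by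
    rw [hper.intervalIntegral_add_eq t (-(π / 2)), show -(π / 2) + π = π / 2 by ring]
    exact integral_inv_sin_sq_add_sq_half_period_le ha
  calc ∫ σ in (0)..(2 * π), (sin σ ^ 2 + a ^ 2)⁻¹
      = (∫ σ in (0)..(0 + π), (sin σ ^ 2 + a ^ 2)⁻¹) +
          ∫ σ in π..(π + π), (sin σ ^ 2 + a ^ 2)⁻¹ := by
        rw [zero_add, intervalIntegral.integral_add_adjacent_intervals (hint _ _) (hint _ _),
          two_mul]
    _ ≤ π ^ 2 / (2 * a) + π ^ 2 / (2 * a) := add_le_add (hperiod 0) (hperiod π)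
    _ = π ^ 2 / a := by ring

end Cosine

section PrincipalValue

open Set

variable {s ε σ : ℝ}

/-- The interval `[0, 2π]` without the `ε`-neighbourhoods of the two zeros `s` and `2π - s` of
`cos s - cos σ`; the principal values in this file are limits of integrals over it. -/
def cutSet (s ε : ℝ) : Set ℝ :=
  Icc 0 (2 * π) \ (Ioo (s - ε) (s + ε) ∪ Ioo (2 * π - s - ε) (2 * π - s + ε))

theorem cutSet_subset (s ε : ℝ) : cutSet s ε ⊆ Icc 0 (2 * π) := sdiff_subset

theorem isCompact_cutSet (s ε : ℝ) : IsCompact (cutSet s ε) :=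
  isCompact_Icc.diff (isOpen_Ioo.union isOpen_Ioo)

theorem cos_sub_cos_ne_zero_of_mem_cutSet (hs : s ∈ Ioo 0 π) (hε : 0 < ε) (hσ : σ ∈ cutSet s ε) :
    cos s - cos σ ≠ 0 := by
  refine fun h => hσ.2 ?_
  rcases eq_or_eq_two_pi_sub_of_cos_eq (Ioo_subset_Icc_self hs) hσ.1 (sub_eq_zero.1 h).symm with
    rfl | rfl
  · exact Or.inl ⟨by linarith, by linarith⟩
  · exact Or.inr ⟨by linarith, by linarith⟩

theorem aecover_cutSet (s : ℝ) :
    AECover (volume.restrict (Icc 0 (2 * π))) (𝓝[>] 0) (cutSet s) where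
  measurableSet ε := (isCompact_cutSet s ε).measurableSet
  ae_eventually_mem := by
    have hev {p x : ℝ} (hx : x ≠ p) : ∀ᶠ ε in 𝓝[>] (0 : ℝ), x ∉ Ioo (p - ε) (p + ε) := by
      filter_upwards [Ioo_mem_nhdsGT (abs_pos.2 (sub_ne_zero.2 hx))] with ε hε hmem
      exact hε.2.not_gt (abs_sub_lt_iff.2 ⟨by linarith [hmem.2], by linarith [hmem.1]⟩)
    have hne (p : ℝ) : ∀ᵐ x ∂volume.restrict (Icc 0 (2 * π)), x ≠ p :=
      (countable_singleton p).ae_notMem _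
    filter_upwards [hne s, hne (2 * π - s), ae_restrict_mem measurableSet_Icc] with x hxs hxs' hx
    filter_upwards [hev hxs, hev hxs'] with ε hnear hnear'
    exact ⟨hx, fun h => h.elim hnear hnear'⟩

theorem tendsto_integral_cutSet {F : ℝ → ℝ} (s : ℝ)
    (hF : IntervalIntegrable F volume 0 (2 * π)) :
    Tendsto (fun ε => ∫ σ in cutSet s ε, F σ) (𝓝[>] 0) (𝓝 (∫ σ in (0)..(2 * π), F σ)) := by
  rw [intervalIntegrable_iff_integrableOn_Icc_of_le two_pi_pos.le] at hF
  rw [intervalIntegral.integral_of_le two_pi_pos.le, ← integral_Icc_eq_integral_Ioc]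
  refine ((aecover_cutSet s).integral_tendsto_of_countably_generated hF).congr fun ε => ?_
  rw [Measure.restrict_restrict (isCompact_cutSet s ε).measurableSet,
    inter_eq_left.2 (cutSet_subset s ε)]

/-- A primitive of `σ ↦ sin s / (cos s - cos σ)` on each interval free of zeros of the denominator.
The arguments of the logarithms may be negative, where `Real.log x = log |x|`. -/
noncomputable def cosKernelPrimitive (s σ : ℝ) : ℝ :=
  log (sin ((σ - s) / 2)) - log (sin ((σ + s) / 2))

theorem hasDerivAt_cosKernelPrimitive (h : cos s - cos σ ≠ 0) :
    HasDerivAt (cosKernelPrimitive s) (sin s / (cos s - cos σ)) σ := by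
  rw [cos_sub_cos_eq_two_mul_sin_mul_sin] at h ⊢
  have hplus : sin ((σ + s) / 2) ≠ 0 := right_ne_zero_of_mul (left_ne_zero_of_mul h)
  have hminus : sin ((σ - s) / 2) ≠ 0 := right_ne_zero_of_mul h
  have hsin : sin s = sin ((σ + s) / 2) * cos ((σ - s) / 2)
      - cos ((σ + s) / 2) * sin ((σ - s) / 2) := by
    rw [← sin_sub]
    congr 1
    ring
  refine (((((hasDerivAt_id σ).sub_const s).div_const 2).sin.log hminus).sub
    ((((hasDerivAt_id σ).add_const s).div_const 2).sin.log hplus)).congr_deriv ?_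
  simp only [id]
  rw [hsin]
  field_simp

theorem continuousOn_div_cos_sub_cos (c : ℝ) {S : Set ℝ} (hS : ∀ σ ∈ S, cos s - cos σ ≠ 0) :
    ContinuousOn (fun σ => c / (cos s - cos σ)) S :=
  continuousOn_const.div (by fun_prop) hS

theorem integral_Icc_cosKernel {a b : ℝ} (hab : a ≤ b) (h : ∀ σ ∈ Icc a b, cos s - cos σ ≠ 0) :
    ∫ σ in Icc a b, sin s / (cos s - cos σ) =
      cosKernelPrimitive s b - cosKernelPrimitive s a := by
  rw [integral_Icc_eq_integral_Ioc, ← intervalIntegral.integral_of_le hab]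
  rw [← uIcc_of_le hab] at h
  exact intervalIntegral.integral_eq_sub_of_hasDerivAt
    (fun σ hσ => hasDerivAt_cosKernelPrimitive (h σ hσ))
    (continuousOn_div_cos_sub_cos _ h).intervalIntegrable

theorem cutSet_eq_union (hs : s ∈ Ioo 0 π) (hε : 0 < ε) :
    cutSet s ε = Icc 0 (s - ε) ∪
      (Icc (s + ε) (2 * π - s - ε) ∪ Icc (2 * π - s + ε) (2 * π)) := by
  obtain ⟨h0, hπ⟩ := hs
  ext x
  simp only [cutSet, Set.mem_sdiff, mem_union, mem_Icc, mem_Ioo]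
  grind

theorem integral_cutSet_cosKernel (hs : s ∈ Ioo 0 π) (hε : ε ∈ Ioo 0 (min s (π - s))) :
    ∫ σ in cutSet s ε, sin s / (cos s - cos σ) =
      2 * (log (sin (s + ε / 2)) - log (sin (s - ε / 2))) := by
  obtain ⟨hε0, hεs, hεπ⟩ := by simpa only [mem_Ioo, lt_min_iff] using hε
  have hne (σ) (hσ : σ ∈ cutSet s ε) : cos s - cos σ ≠ 0 :=
    cos_sub_cos_ne_zero_of_mem_cutSet hs hε0 hσ
  have hint : IntegrableOn (fun σ => sin s / (cos s - cos σ)) (cutSet s ε) :=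
    (continuousOn_div_cos_sub_cos _ hne).integrableOn_compact (isCompact_cutSet s ε)
  rw [cutSet_eq_union hs hε0] at hne hint ⊢
  obtain ⟨hint₁, hint₂, hint₃⟩ := by simpa only [integrableOn_union] using hint
  rw [setIntegral_union (by grind)
      (measurableSet_Icc.union measurableSet_Icc) hint₁ (hint₂.union hint₃),
    setIntegral_union (by grind) measurableSet_Icc hint₂ hint₃,
    integral_Icc_cosKernel (by linarith) fun σ hσ => hne σ (Or.inl hσ),
    integral_Icc_cosKernel (by linarith [hs.2]) fun σ hσ => hne σ (Or.inr (Or.inl hσ)),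
    integral_Icc_cosKernel (by linarith) fun σ hσ => hne σ (Or.inr (Or.inr hσ))]
  unfold cosKernelPrimitive
  rw [show (s - ε - s) / 2 = -(ε / 2) by ring, show (s - ε + s) / 2 = s - ε / 2 by ring,
    show (0 - s) / 2 = -(s / 2) by ring, show (0 + s) / 2 = s / 2 by ring,
    show (2 * π - s - ε - s) / 2 = π - (s + ε / 2) by ring,
    show (2 * π - s - ε + s) / 2 = π - ε / 2 by ring,
    show (s + ε - s) / 2 = ε / 2 by ring, show (s + ε + s) / 2 = s + ε / 2 by ring,
    show (2 * π - s) / 2 = π - s / 2 by ring, show (2 * π + s) / 2 = s / 2 + π by ring,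
    show (2 * π - s + ε - s) / 2 = π - (s - ε / 2) by ring,
    show (2 * π - s + ε + s) / 2 = ε / 2 + π by ring]
  simp only [sin_neg, sin_pi_sub, sin_add_pi, log_neg_eq_log]
  ring

theorem tendsto_integral_cutSet_cosKernel (hs : s ∈ Ioo 0 π) :
    Tendsto (fun ε => ∫ σ in cutSet s ε, sin s / (cos s - cos σ)) (𝓝[>] 0) (𝓝 0) := by
  have hsin : sin s ≠ 0 := (sin_pos_of_mem_Ioo hs).ne'
  have hcont : ContinuousAt
      (fun ε : ℝ => 2 * (log (sin (s + ε / 2)) - log (sin (s - ε / 2)))) 0 :=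
    continuousAt_const.mul (ContinuousAt.sub
      (ContinuousAt.log (by fun_prop) (by simpa using hsin))
      (ContinuousAt.log (by fun_prop) (by simpa using hsin)))
  have hlim := hcont.tendsto
  simp only [zero_div, add_zero, sub_zero, sub_self, mul_zero] at hlim
  refine (hlim.mono_left nhdsWithin_le_nhds).congr' ?_
  filter_upwards [Ioo_mem_nhdsGT (lt_min hs.1 (sub_pos.2 hs.2))] with ε hε
  exact (integral_cutSet_cosKernel hs hε).symm

theorem pvIntegral2_div_cos_sub_cos (hs : s ∈ Ioo 0 π) {q : ℝ → ℝ} (c : ℝ)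
    (hint : IntervalIntegrable (fun σ => (q σ - c) / (cos s - cos σ)) volume 0 (2 * π)) :
    pvIntegral2 (fun σ => q σ / (cos s - cos σ)) s =
      ∫ σ in (0)..(2 * π), (q σ - c) / (cos s - cos σ) := by
  have hsin : sin s ≠ 0 := (sin_pos_of_mem_Ioo hs).ne'
  have hlim := (tendsto_integral_cutSet s hint).add
    ((tendsto_integral_cutSet_cosKernel hs).const_mul (c / sin s))
  rw [mul_zero, add_zero] at hlim
  refine (hlim.congr' ?_).limUnder_eq
  filter_upwards [self_mem_nhdsWithin] with ε hε
  have hkernel : IntegrableOn (fun σ => sin s / (cos s - cos σ)) (cutSet s ε) :=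
    (continuousOn_div_cos_sub_cos _ fun σ => cos_sub_cos_ne_zero_of_mem_cutSet hs hε)
      |>.integrableOn_compact (isCompact_cutSet s ε)
  rw [intervalIntegrable_iff_integrableOn_Icc_of_le two_pi_pos.le] at hint
  rw [← integral_const_mul,
    ← integral_add (hint.mono_set (cutSet_subset s ε)) (hkernel.const_mul (c / sin s))]
  refine integral_congr_ae (ae_of_all _ fun σ => ?_)
  dsimp only
  rw [div_mul_div_cancel₀ hsin, ← add_div, sub_add_cancel]

end PrincipalValue

/-- `q σ` differs from `q s` by at most `C |cos s - cos σ| / (sin² σ + sin² s)`. For fixed `s` this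
is Lipschitz continuity in `cos σ`; the weight lets `C` be chosen independently of `s`. The
inequality is multiplied out so that nothing is divided by zero when `sin s = 0`. -/
structure CosLipschitzAt (s C : ℝ) (q : ℝ → ℝ) : Prop where
  measurable : Measurable q
  abs_sub_mul_le : ∀ σ, |q σ - q s| * (sin σ ^ 2 + sin s ^ 2) ≤ C * |cos s - cos σ|

/-- The principal value of `sin s / (2π) ∫ q σ / (cos s - cos σ) dσ` as an absolutely convergent
integral: the kernel `1 / (cos s - cos σ)` has principal value zero, so `q s` may be subtracted. -/
noncomputable def regularizedTransform (q : ℝ → ℝ) (s : ℝ) : ℝ :=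
  sin s / (2 * π) * ∫ σ in (0)..(2 * π), (q σ - q s) / (cos s - cos σ)

namespace CosLipschitzAt

open Set

variable {s A B C : ℝ} {p q : ℝ → ℝ}

theorem nonneg (hq : CosLipschitzAt s C q) : 0 ≤ C := by
  have hmul (σ) : 0 ≤ C * |cos s - cos σ| :=
    (mul_nonneg (abs_nonneg _) (by positivity)).trans (hq.abs_sub_mul_le σ)
  have hsum : |cos s - cos 0| + |cos s - cos π| = 2 := by
    rw [cos_zero, cos_pi, abs_of_nonpos (by linarith [cos_le_one s]),
      abs_of_nonneg (by linarith [neg_one_le_cos s])]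
    ring
  have htwo : 0 ≤ C * 2 := by
    rw [← hsum, mul_add]
    exact add_nonneg (hmul 0) (hmul π)
  linarith

theorem add (hp : CosLipschitzAt s A p) (hq : CosLipschitzAt s B q) :
    CosLipschitzAt s (A + B) fun σ => p σ + q σ where
  measurable := hp.measurable.add hq.measurable
  abs_sub_mul_le σ := by
    calc |p σ + q σ - (p s + q s)| * (sin σ ^ 2 + sin s ^ 2)
        ≤ (|p σ - p s| + |q σ - q s|) * (sin σ ^ 2 + sin s ^ 2) := by
          rw [add_sub_add_comm]
          gcongr
          exact abs_add_le _ _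
      _ ≤ (A + B) * |cos s - cos σ| := by
          rw [add_mul, add_mul]
          exact add_le_add (hp.abs_sub_mul_le σ) (hq.abs_sub_mul_le σ)

theorem comp (hq : CosLipschitzAt s C q) {F : ℝ → ℝ} (hF : Measurable F) {K : ℝ} (hK : 0 ≤ K)
    {S : Set ℝ} (hS : ∀ σ, q σ ∈ S) (hLip : ∀ x ∈ S, ∀ y ∈ S, |F x - F y| ≤ K * |x - y|) :
    CosLipschitzAt s (K * C) fun σ => F (q σ) where
  measurable := hF.comp hq.measurable
  abs_sub_mul_le σ := by
    calc |F (q σ) - F (q s)| * (sin σ ^ 2 + sin s ^ 2)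
        ≤ K * |q σ - q s| * (sin σ ^ 2 + sin s ^ 2) := by
          gcongr
          exact hLip _ (hS σ) _ (hS s)
      _ ≤ K * C * |cos s - cos σ| := by
          rw [mul_assoc, mul_assoc]
          exact mul_le_mul_of_nonneg_left (hq.abs_sub_mul_le σ) hK

theorem const_mul (hq : CosLipschitzAt s C q) (t : ℝ) :
    CosLipschitzAt s (|t| * C) fun σ => t * q σ :=
  hq.comp (measurable_const_mul t) (abs_nonneg t) (fun _ => mem_univ _)
    fun x _ y _ => by rw [← mul_sub, abs_mul]

theorem div (hp : CosLipschitzAt s B p) (hq : CosLipschitzAt s A q) {m R : ℝ} (hm : 0 < m)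
    (hmq : ∀ σ, m ≤ q σ) (hR : |p s / q s| ≤ R) :
    CosLipschitzAt s ((B + R * A) / m) fun σ => p σ / q σ where
  measurable := hp.measurable.div hq.measurable
  abs_sub_mul_le σ := by
    have hpos (σ) : 0 < q σ := hm.trans_le (hmq σ)
    have hR0 : 0 ≤ R := (abs_nonneg _).trans hR
    have hsplit : p σ / q σ - p s / q s = (p σ - p s - p s / q s * (q σ - q s)) / q σ := by
      field_simp [(hpos σ).ne', (hpos s).ne']
      ring
    have hnum : |p σ - p s - p s / q s * (q σ - q s)| ≤ |p σ - p s| + R * |q σ - q s| := by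
      refine (abs_sub _ _).trans ?_
      rw [abs_mul]
      gcongr
    calc |p σ / q σ - p s / q s| * (sin σ ^ 2 + sin s ^ 2)
        ≤ (|p σ - p s| + R * |q σ - q s|) / m * (sin σ ^ 2 + sin s ^ 2) := by
          rw [hsplit, abs_div, abs_of_pos (hpos σ)]
          gcongr
          exact hmq σ
      _ = (|p σ - p s| * (sin σ ^ 2 + sin s ^ 2) +
            R * (|q σ - q s| * (sin σ ^ 2 + sin s ^ 2))) / m := by ring
      _ ≤ (B * |cos s - cos σ| + R * (A * |cos s - cos σ|)) / m := by
          refine div_le_div_of_nonneg_right (add_le_add (hp.abs_sub_mul_le σ) ?_) hm.le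
          exact mul_le_mul_of_nonneg_left (hq.abs_sub_mul_le σ) hR0
      _ = (B + R * A) / m * |cos s - cos σ| := by ring

theorem abs_div_cos_sub_cos_le (hq : CosLipschitzAt s C q) (hs : sin s ≠ 0) (σ : ℝ) :
    |(q σ - q s) / (cos s - cos σ)| ≤ C * (sin σ ^ 2 + sin s ^ 2)⁻¹ := by
  have hweight : 0 < sin σ ^ 2 + sin s ^ 2 := by positivity
  by_cases hσ : cos s - cos σ = 0
  · rw [hσ, div_zero, abs_zero]
    exact mul_nonneg (hq.nonneg) (inv_nonneg.2 hweight.le)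
  · rw [abs_div, ← div_eq_mul_inv, div_le_div_iff₀ (abs_pos.2 hσ) hweight]
    exact hq.abs_sub_mul_le σ

theorem intervalIntegrable (hq : CosLipschitzAt s C q) (hs : sin s ≠ 0) :
    IntervalIntegrable (fun σ => (q σ - q s) / (cos s - cos σ)) volume 0 (2 * π) := by
  have hmeas : Measurable fun σ => (q σ - q s) / (cos s - cos σ) := by
    have hqm := hq.measurable
    fun_prop
  exact (((continuous_inv_sin_sq_add_sq hs).const_mul C).intervalIntegrable 0 (2 * π)).mono_fun'
    hmeas.aestronglyMeasurable (ae_of_all _ (hq.abs_div_cos_sub_cos_le hs))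

theorem abs_regularizedTransform_le (hq : CosLipschitzAt s C q) (hs : s ∈ Ioo 0 π) :
    |regularizedTransform q s| ≤ π / 2 * C := by
  have hsin : 0 < sin s := sin_pos_of_mem_Ioo hs
  have hC : 0 ≤ C := hq.nonneg
  have hint : |∫ σ in (0)..(2 * π), (q σ - q s) / (cos s - cos σ)| ≤ C * (π ^ 2 / sin s) := by
    calc |∫ σ in (0)..(2 * π), (q σ - q s) / (cos s - cos σ)|
        ≤ ∫ σ in (0)..(2 * π), C * (sin σ ^ 2 + sin s ^ 2)⁻¹ := by
          rw [← norm_eq_abs]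
          exact intervalIntegral.norm_integral_le_of_norm_le two_pi_pos.le
              (ae_of_all _ fun σ _ => hq.abs_div_cos_sub_cos_le hsin.ne' σ)
              (((continuous_inv_sin_sq_add_sq hsin.ne').const_mul C).intervalIntegrable _ _)
      _ ≤ C * (π ^ 2 / sin s) := by
          rw [intervalIntegral.integral_const_mul]
          gcongr
          exact integral_inv_sin_sq_add_sq_le hsin
  calc |regularizedTransform q s|
      = sin s / (2 * π) * |∫ σ in (0)..(2 * π), (q σ - q s) / (cos s - cos σ)| := by
        rw [regularizedTransform, abs_mul, abs_of_pos (by positivity)]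
    _ ≤ sin s / (2 * π) * (C * (π ^ 2 / sin s)) := by gcongr
    _ = π / 2 * C := by
        field_simp

theorem regularizedTransform_add (hp : CosLipschitzAt s A p) (hq : CosLipschitzAt s B q)
    (hs : sin s ≠ 0) :
    regularizedTransform (fun σ => p σ + q σ) s =
      regularizedTransform p s + regularizedTransform q s := by
  simp only [regularizedTransform]
  rw [← mul_add, ← intervalIntegral.integral_add (hp.intervalIntegrable hs)
    (hq.intervalIntegrable hs)]
  simp only [← add_div, add_sub_add_comm]

theorem pvIntegral2_eq (hq : CosLipschitzAt s C q) (hs : s ∈ Ioo 0 π) :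
    sin s / (2 * π) * pvIntegral2 (fun σ => q σ / (cos s - cos σ)) s = regularizedTransform q s :=
  congrArg (sin s / (2 * π) * ·) <|
    pvIntegral2_div_cos_sub_cos hs (q s) (hq.intervalIntegrable (sin_pos_of_mem_Ioo hs).ne')

end CosLipschitzAt

theorem regularizedTransform_const_mul (t : ℝ) (q : ℝ → ℝ) (s : ℝ) :
    regularizedTransform (fun σ => t * q σ) s = t * regularizedTransform q s := by
  simp only [regularizedTransform, ← mul_sub, mul_div_assoc, intervalIntegral.integral_const_mul]
  ring

theorem abs_log_sub_log_le {m x y : ℝ} (hm : 0 < m) (hx : m ≤ x) (hy : m ≤ y) :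
    |log x - log y| ≤ m⁻¹ * |x - y| := by
  have hle {x y : ℝ} (hx : m ≤ x) (hy : m ≤ y) : log x - log y ≤ m⁻¹ * |x - y| := by
    have hx0 := hm.trans_le hx
    have hy0 := hm.trans_le hy
    calc log x - log y = log (x / y) := (log_div hx0.ne' hy0.ne').symm
      _ ≤ x / y - 1 := log_le_sub_one_of_pos (by positivity)
      _ = y⁻¹ * (x - y) := by field_simp
      _ ≤ y⁻¹ * |x - y| := mul_le_mul_of_nonneg_left (le_abs_self _) (inv_nonneg.2 hy0.le)
      _ ≤ m⁻¹ * |x - y| := by gcongr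
  refine abs_sub_le_iff.2 ⟨hle hx hy, ?_⟩
  rw [abs_sub_comm]
  exact hle hy hx

theorem abs_log_one_add_sub_self_sub_le {r x y : ℝ} (hr : r ≤ 1 / 2) (hx : |x| ≤ r)
    (hy : |y| ≤ r) : |(log (1 + x) - x) - (log (1 + y) - y)| ≤ 2 * r * |x - y| := by
  have hpos : ∀ z ∈ Set.Icc (-r) r, 0 < 1 + z := fun z hz => by linarith [hz.1]
  have hderiv : ∀ z ∈ Set.Icc (-r) r,
      HasDerivWithinAt (fun z => log (1 + z) - z) (1 / (1 + z) - 1) (Set.Icc (-r) r) z :=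
    fun z hz => ((((hasDerivAt_id' z).const_add 1).log (hpos z hz).ne').sub
      (hasDerivAt_id' z)).hasDerivWithinAt
  have hbound : ∀ z ∈ Set.Icc (-r) r, ‖1 / (1 + z) - 1‖ ≤ 2 * r := fun z hz => by
    have hz0 := hpos z hz
    have hr0 : 0 ≤ r := (abs_nonneg x).trans hx
    rw [norm_eq_abs, show 1 / (1 + z) - 1 = -z / (1 + z) by field_simp; ring, abs_div, abs_neg,
      abs_of_pos hz0, div_le_iff₀ hz0]
    calc |z| ≤ r * 1 := (abs_le.2 hz).trans_eq (mul_one r).symm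
      _ ≤ r * (2 * (1 + z)) := by
        gcongr
        linarith [hz.1]
      _ = 2 * r * (1 + z) := by ring
  exact (convex_Icc (-r) r).norm_image_sub_le_of_norm_hasDerivWithin_le hderiv hbound
    (abs_le.1 hy) (abs_le.1 hx)

namespace CosLipschitzAt

variable {s C : ℝ} {q : ℝ → ℝ}

theorem log (hq : CosLipschitzAt s C q) {m : ℝ} (hm : 0 < m) (hmq : ∀ σ, m ≤ q σ) :
    CosLipschitzAt s (m⁻¹ * C) fun σ => Real.log (q σ) :=
  hq.comp measurable_log (inv_nonneg.2 hm.le) (S := Set.Ici m) hmq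
    fun _ hx _ hy => abs_log_sub_log_le hm hx hy

theorem log_one_add_sub_self (hq : CosLipschitzAt s C q) {r : ℝ} (hr : r ≤ 1 / 2)
    (hqr : ∀ σ, |q σ| ≤ r) : CosLipschitzAt s (2 * r * C) fun σ => Real.log (1 + q σ) - q σ :=
  hq.comp (F := fun y => Real.log (1 + y) - y) (by fun_prop)
    (mul_nonneg zero_le_two ((abs_nonneg _).trans (hqr 0))) (S := {y | |y| ≤ r}) hqr
    fun _ hx _ hy => abs_log_one_add_sub_self_sub_le hr hx hy

end CosLipschitzAt

theorem tendsto_div_sin {v : ℝ → ℝ} {v' p : ℝ} (hv : HasDerivAt v v' p) (hvp : v p = 0)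
    (hp : sin p = 0) : Tendsto (fun x => v x / sin x) (𝓝[≠] p) (𝓝 (v' / cos p)) := by
  have hcos : cos p ≠ 0 := fun h => by simpa [hp, h] using sin_sq_add_cos_sq p
  refine ((hasDerivAt_iff_tendsto_slope.1 hv).div
    (hasDerivAt_iff_tendsto_slope.1 (hasDerivAt_sin p)) hcos).congr' ?_
  filter_upwards [self_mem_nhdsWithin] with x hx
  have hxp : x - p ≠ 0 := sub_ne_zero.2 hx
  simp only [Pi.div_apply, slope_def_field, hvp, hp, sub_zero]
  field_simp

/-- A twice continuously differentiable even function of period `2π`. Evenness is expressed, as in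
`IsSimpleLoop`, by reflection in `π`. -/
structure IsEvenSymbol (u : ℝ → ℝ) : Prop where
  contDiff : ContDiff ℝ 2 u
  periodic : Function.Periodic u (2 * π)
  symm : ∀ σ, u (2 * π - σ) = u σ

/-- The diagonal value `b_u(x, x) = u'(x) / (2 sin x)` of the symbol quotient, extended by
l'Hôpital's rule to the zeros of the sine. -/
noncomputable def diagQuotient (u : ℝ → ℝ) (x : ℝ) : ℝ :=
  if sin x = 0 then deriv (deriv u) x / (2 * cos x) else deriv u x / (2 * sin x)

theorem diagQuotient_of_sin_ne_zero (u : ℝ → ℝ) {x : ℝ} (hx : sin x ≠ 0) :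
    diagQuotient u x = deriv u x / (2 * sin x) := if_neg hx

namespace IsEvenSymbol

open Set

variable {u v : ℝ → ℝ} (hu : IsEvenSymbol u)
include hu

theorem add_const_mul (hv : IsEvenSymbol v) (h : ℝ) : IsEvenSymbol fun σ => u σ + h * v σ where
  contDiff := hu.contDiff.add (contDiff_const.mul hv.contDiff)
  periodic σ := by simp only [hu.periodic σ, hv.periodic σ]
  symm σ := by simp only [hu.symm σ, hv.symm σ]

theorem hasDerivAt (x : ℝ) : HasDerivAt u (deriv u x) x :=
  (hu.contDiff.differentiable two_ne_zero x).hasDerivAt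

theorem hasDerivAt_deriv (x : ℝ) : HasDerivAt (deriv u) (deriv (deriv u) x) x :=
  (hu.contDiff.differentiable_deriv_two x).hasDerivAt

theorem continuous_deriv_deriv : Continuous (deriv (deriv u)) :=
  ((contDiff_succ_iff_deriv (n := 1)).1 hu.contDiff).2.2.continuous_deriv le_rfl

theorem apply_int_mul_two_pi_sub (k : ℤ) (σ : ℝ) : u (k * (2 * π) - σ) = u σ := by
  rw [hu.periodic.int_mul_sub_eq, ← hu.symm σ, ← hu.periodic (-σ), add_comm, ← sub_eq_add_neg]

theorem deriv_int_mul_two_pi_sub (k : ℤ) (σ : ℝ) :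
    deriv u (k * (2 * π) - σ) = -deriv u σ := by
  rw [← neg_eq_iff_eq_neg, ← deriv_comp_const_sub]
  exact congrArg (deriv · σ) (funext (hu.apply_int_mul_two_pi_sub k))

theorem deriv_int_mul_two_pi_add (k : ℤ) (σ : ℝ) : deriv u (k * (2 * π) + σ) = deriv u σ := by
  have hneg := hu.deriv_int_mul_two_pi_sub 0 σ
  rw [Int.cast_zero, zero_mul, zero_sub] at hneg
  rw [← sub_neg_eq_add, hu.deriv_int_mul_two_pi_sub, hneg, neg_neg]

theorem deriv_eq_zero_of_sin_eq_zero {x : ℝ} (hx : sin x = 0) : deriv u x = 0 := by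
  obtain ⟨k, rfl⟩ := sin_eq_zero_iff.1 hx
  have h := hu.deriv_int_mul_two_pi_sub k (k * π)
  rw [show (k : ℝ) * (2 * π) - k * π = k * π by ring] at h
  linarith

theorem eq_of_cos_eq {x y : ℝ} (h : cos x = cos y) : u x = u y := by
  obtain ⟨k, rfl | rfl⟩ := cos_eq_cos_iff.1 h
  · rw [show 2 * (k : ℝ) * π + x = x + k * (2 * π) by ring, hu.periodic.int_mul]
  · rw [show 2 * (k : ℝ) * π - x = k * (2 * π) - x by ring, hu.apply_int_mul_two_pi_sub]

theorem deriv_div_sin_eq_of_cos_eq {x y : ℝ} (h : cos x = cos y) :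
    deriv u x / sin x = deriv u y / sin y := by
  obtain ⟨k, rfl | rfl⟩ := cos_eq_cos_iff.1 h
  · rw [show 2 * (k : ℝ) * π + x = k * (2 * π) + x by ring, hu.deriv_int_mul_two_pi_add,
      add_comm, sin_add_int_mul_two_pi]
  · rw [show 2 * (k : ℝ) * π - x = k * (2 * π) - x by ring, hu.deriv_int_mul_two_pi_sub,
      sin_int_mul_two_pi_sub, neg_div_neg_eq]

theorem continuous_diagQuotient : Continuous (diagQuotient u) := by
  refine continuous_iff_continuousAt.2 fun x => ?_
  by_cases hx : sin x = 0
  · rw [continuousAt_iff_punctured_nhds]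
    have hcos : cos x ≠ 0 := fun h => by simpa [hx, h] using sin_sq_add_cos_sq x
    have hlim := (tendsto_div_sin (hu.hasDerivAt_deriv x)
      (hu.deriv_eq_zero_of_sin_eq_zero hx) hx).div_const 2
    rw [diagQuotient, if_pos hx, mul_comm 2, ← div_div]
    refine hlim.congr' ?_
    filter_upwards [(hasDerivAt_sin x).eventually_ne hcos] with y hy
    rw [diagQuotient_of_sin_ne_zero u hy, div_div, mul_comm 2]
  · have heq : diagQuotient u =ᶠ[𝓝 x] fun y => deriv u y / (2 * sin y) := by
      filter_upwards [continuous_sin.continuousAt.eventually_ne hx] with y hy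
      exact diagQuotient_of_sin_ne_zero u hy
    refine ContinuousAt.congr ?_ heq.symm
    exact (hu.hasDerivAt_deriv x).continuousAt.div (by fun_prop) (by simpa using hx)

theorem hasDerivAt_diagQuotient {x : ℝ} (hx : sin x ≠ 0) :
    HasDerivAt (diagQuotient u)
      ((deriv (deriv u) x / 2 - diagQuotient u x * cos x) / sin x) x := by
  have hquot : HasDerivAt (fun y => deriv u y / (2 * sin y)) _ x :=
    (hu.hasDerivAt_deriv x).div ((hasDerivAt_sin x).const_mul 2) (by simpa using hx)
  have heq : diagQuotient u =ᶠ[𝓝 x] fun y => deriv u y / (2 * sin y) := by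
    filter_upwards [continuous_sin.continuousAt.eventually_ne hx] with y hy
    exact diagQuotient_of_sin_ne_zero u hy
  refine (hquot.congr_of_eventuallyEq heq).congr_deriv ?_
  rw [diagQuotient_of_sin_ne_zero u hx]
  field_simp

theorem exists_abs_diagQuotient_le : ∃ M, ∀ x ∈ Icc 0 π, |diagQuotient u x| ≤ M :=
  isCompact_Icc.exists_bound_of_continuousOn hu.continuous_diagQuotient.continuousOn

theorem exists_diagQuotient_sub_mul_sin_sq_le :
    ∃ K, 0 ≤ K ∧ ∀ s ∈ Ioo 0 π, ∀ ξ ∈ Ioo 0 π, ∃ z, |cos s - cos z| ≤ |cos s - cos ξ| ∧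
      |diagQuotient u ξ - diagQuotient u s| * sin z ^ 2 ≤ K * |cos s - cos ξ| := by
  obtain ⟨M, hM⟩ := hu.exists_abs_diagQuotient_le
  obtain ⟨B, hB⟩ := isCompact_Icc.exists_bound_of_continuousOn (s := Icc 0 π)
    hu.continuous_deriv_deriv.continuousOn
  have hπ : (0 : ℝ) ∈ Icc 0 π := left_mem_Icc.2 pi_pos.le
  have hK : 0 ≤ B / 2 + M :=
    add_nonneg (div_nonneg ((norm_nonneg _).trans (hB 0 hπ)) zero_le_two)
      ((abs_nonneg _).trans (hM 0 hπ))
  refine ⟨B / 2 + M, hK, fun s hs ξ hξ => ?_⟩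
  rcases eq_or_ne s ξ with rfl | hne
  · exact ⟨s, le_rfl, by simp⟩
  have hIcc := ordConnected_Ioo.uIcc_subset hs hξ
  obtain ⟨z, hz, hmean⟩ := exists_sub_mul_sin_eq hne fun x hx =>
    hu.hasDerivAt_diagQuotient (sin_pos_of_mem_Ioo (hIcc hx)).ne'
  have hzI : z ∈ Ioo 0 π := hIcc (uIoo_subset_uIcc_self hz)
  have hsin : sin z ≠ 0 := (sin_pos_of_mem_Ioo hzI).ne'
  refine ⟨z, abs_cos_sub_cos_le_of_mem_uIoo (Ioo_subset_Icc_self hs) (Ioo_subset_Icc_self hξ) hz,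
    ?_⟩
  have hnum : |deriv (deriv u) z / 2 - diagQuotient u z * cos z| ≤ B / 2 + M := by
    refine (abs_sub _ _).trans (add_le_add ?_ ?_)
    · rw [abs_div, abs_two]
      gcongr
      exact hB z (Ioo_subset_Icc_self hzI)
    · rw [abs_mul]
      exact (mul_le_of_le_one_right (abs_nonneg _) (abs_cos_le_one z)).trans
        (hM z (Ioo_subset_Icc_self hzI))
  calc |diagQuotient u ξ - diagQuotient u s| * sin z ^ 2
      = |(diagQuotient u ξ - diagQuotient u s) * sin z * sin z| := by
        rw [mul_assoc, abs_mul, abs_mul_self, sq]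
    _ = |deriv (deriv u) z / 2 - diagQuotient u z * cos z| * |cos s - cos ξ| := by
        rw [hmean, mul_assoc, div_mul_cancel₀ _ hsin, abs_mul, mul_comm]
    _ ≤ (B / 2 + M) * |cos s - cos ξ| := by gcongr

theorem bSymb_of_cos_eq {s σ : ℝ} (hs : sin s ≠ 0) (h : cos σ = cos s) :
    bSymb u σ s = diagQuotient u s := by
  have hsin : sin σ ≠ 0 := by
    rw [← pow_ne_zero_iff two_ne_zero, sin_sq, h, ← sin_sq]
    exact pow_ne_zero 2 hs
  have hlim : Tendsto (fun τ => slope u σ τ / slope (fun τ => -2 * cos τ) σ τ) (𝓝[≠] σ)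
      (𝓝 (deriv u σ / (-2 * -sin σ))) :=
    (hu.hasDerivAt σ).tendsto_slope.div ((hasDerivAt_cos σ).const_mul (-2)).tendsto_slope
      (by simpa using hsin)
  have hvalue : deriv u σ / (-2 * -sin σ) = diagQuotient u s := by
    rw [diagQuotient_of_sin_ne_zero u hs, neg_mul_neg, mul_comm 2, ← div_div,
      hu.deriv_div_sin_eq_of_cos_eq h, div_div, mul_comm 2]
  rw [bSymb, if_pos h]
  refine (hvalue ▸ hlim.congr' ?_).limUnder_eq
  filter_upwards [self_mem_nhdsWithin] with τ hτ
  rw [slope_def_field, slope_def_field, div_div_div_cancel_right₀ (sub_ne_zero.2 hτ),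
    hu.eq_of_cos_eq h, h]
  congr 1
  ring

theorem bSymb_self {s : ℝ} (hs : sin s ≠ 0) : bSymb u s s = diagQuotient u s :=
  hu.bSymb_of_cos_eq hs rfl

theorem measurable_bSymb {s : ℝ} (hs : sin s ≠ 0) : Measurable fun σ => bSymb u σ s := by
  have hite : (fun σ => bSymb u σ s) = fun σ =>
      if cos σ = cos s then diagQuotient u s else (u σ - u s) / (2 * (cos s - cos σ)) := by
    funext σ
    split_ifs with h
    · exact hu.bSymb_of_cos_eq hs h
    · exact if_neg h
  have hmeas : Measurable u := hu.contDiff.continuous.measurable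
  rw [hite]
  exact Measurable.ite (measurableSet_eq_fun measurable_cos measurable_const) measurable_const
    (by fun_prop)

theorem bSymb_add_const_mul (hv : IsEvenSymbol v) (h : ℝ) {s : ℝ} (hs : sin s ≠ 0) (σ : ℝ) :
    bSymb (fun θ => u θ + h * v θ) σ s = bSymb u σ s + h * bSymb v σ s := by
  by_cases hσ : cos σ = cos s
  · have hderiv : deriv (fun θ => u θ + h * v θ) s = deriv u s + h * deriv v s :=
      ((hu.hasDerivAt s).add ((hv.hasDerivAt s).const_mul h)).deriv
    rw [(hu.add_const_mul hv h).bSymb_of_cos_eq hs hσ, hu.bSymb_of_cos_eq hs hσ,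
      hv.bSymb_of_cos_eq hs hσ]
    simp only [diagQuotient_of_sin_ne_zero _ hs, hderiv]
    ring
  · simp only [bSymb, if_neg hσ]
    ring

theorem exists_bSymb_eq_diagQuotient {s : ℝ} (hs : s ∈ Ioo 0 π) (σ : ℝ) :
    ∃ ξ ∈ Ioo 0 π, |cos s - cos ξ| ≤ |cos s - cos σ| ∧ bSymb u σ s = diagQuotient u ξ := by
  by_cases hσ : cos σ = cos s
  · exact ⟨s, hs, by simp, hu.bSymb_of_cos_eq (sin_pos_of_mem_Ioo hs).ne' hσ⟩
  have hcos : cos (arccos (cos σ)) = cos σ := cos_arccos (neg_one_le_cos σ) (cos_le_one σ)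
  have hmem : arccos (cos σ) ∈ Icc 0 π := ⟨arccos_nonneg _, arccos_le_pi _⟩
  have hne : s ≠ arccos (cos σ) := fun h => hσ (by rw [h, hcos])
  obtain ⟨ξ, hξ, hmean⟩ := exists_sub_mul_sin_eq hne fun x _ => hu.hasDerivAt x
  have hξI : ξ ∈ Ioo 0 π := uIoo_subset_Ioo (Ioo_subset_Icc_self hs) hmem hξ
  have hsin : sin ξ ≠ 0 := (sin_pos_of_mem_Ioo hξI).ne'
  refine ⟨ξ, hξI, ?_, ?_⟩
  · rw [← hcos]
    exact abs_cos_sub_cos_le_of_mem_uIoo (Ioo_subset_Icc_self hs) hmem hξ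
  · rw [hcos, hu.eq_of_cos_eq hcos] at hmean
    have hsub : cos s - cos σ ≠ 0 := sub_ne_zero.2 (Ne.symm hσ)
    rw [bSymb, if_neg hσ, diagQuotient_of_sin_ne_zero u hsin,
      div_eq_div_iff (by simpa using hsub) (by simpa using hsin)]
    linarith

theorem exists_abs_bSymb_le : ∃ M, ∀ s ∈ Ioo 0 π, ∀ σ, |bSymb u σ s| ≤ M := by
  obtain ⟨M, hM⟩ := hu.exists_abs_diagQuotient_le
  refine ⟨M, fun s hs σ => ?_⟩
  obtain ⟨ξ, hξ, -, hb⟩ := hu.exists_bSymb_eq_diagQuotient hs σ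
  exact hb ▸ hM ξ (Ioo_subset_Icc_self hξ)

theorem exists_cosLipschitzAt_bSymb :
    ∃ C, ∀ s ∈ Ioo 0 π, CosLipschitzAt s C fun σ => bSymb u σ s := by
  obtain ⟨M, hM⟩ := hu.exists_abs_diagQuotient_le
  obtain ⟨K, hK, hmean⟩ := hu.exists_diagQuotient_sub_mul_sin_sq_le
  refine ⟨2 * K + 12 * M, fun s hs => ?_⟩
  have hs0 : sin s ≠ 0 := (sin_pos_of_mem_Ioo hs).ne'
  refine ⟨hu.measurable_bSymb hs0, fun σ => ?_⟩
  obtain ⟨ξ, hξ, hξσ, hb⟩ := hu.exists_bSymb_eq_diagQuotient hs σ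
  obtain ⟨z, hzξ, hz⟩ := hmean s hs ξ hξ
  rw [hb, hu.bSymb_self hs0]
  have hweighted : |diagQuotient u ξ - diagQuotient u s| * sin z ^ 2 ≤ K * |cos s - cos σ| :=
    hz.trans (mul_le_mul_of_nonneg_left hξσ hK)
  have hdiff : |diagQuotient u ξ - diagQuotient u s| ≤ 2 * M := by
    linarith [abs_sub (diagQuotient u ξ) (diagQuotient u s), hM ξ (Ioo_subset_Icc_self hξ),
      hM s (Ioo_subset_Icc_self hs)]
  have hsin : sin σ ^ 2 + sin s ^ 2 ≤ 2 * sin z ^ 2 + 6 * |cos s - cos σ| := by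
    have htri : |cos σ - cos z| ≤ |cos s - cos σ| + |cos s - cos z| := by
      rw [abs_sub_comm (cos s) (cos σ)]
      exact abs_sub_le _ _ _
    linarith [sin_sq_le_sin_sq_add σ z, sin_sq_le_sin_sq_add s z]
  calc |diagQuotient u ξ - diagQuotient u s| * (sin σ ^ 2 + sin s ^ 2)
      ≤ |diagQuotient u ξ - diagQuotient u s| * (2 * sin z ^ 2 + 6 * |cos s - cos σ|) := by gcongr
    _ = 2 * (|diagQuotient u ξ - diagQuotient u s| * sin z ^ 2) +
          6 * |diagQuotient u ξ - diagQuotient u s| * |cos s - cos σ| := by ring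
    _ ≤ 2 * (K * |cos s - cos σ|) + 6 * (2 * M) * |cos s - cos σ| := by
        linarith [mul_le_mul_of_nonneg_right hdiff (abs_nonneg (cos s - cos σ))]
    _ = (2 * K + 12 * M) * |cos s - cos σ| := by ring

end IsEvenSymbol

/-- An even symbol that increases from a nondegenerate minimum at `0` to a nondegenerate maximum at
`π`, which is what keeps `bSymb f` bounded away from zero. -/
structure IsLoopSymbol (f : ℝ → ℝ) : Prop extends IsEvenSymbol f where
  deriv2_zero : 0 < deriv (deriv f) 0
  deriv_pos : ∀ σ ∈ Set.Ioo 0 π, 0 < deriv f σ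
  deriv2_pi : deriv (deriv f) π < 0

theorem IsSimpleLoop.isLoopSymbol {α : ℝ} {f : ℝ → ℝ} (hf : IsSimpleLoop α f) :
    IsLoopSymbol f where
  contDiff := hf.smooth
  periodic := hf.periodic
  symm := hf.symm
  deriv2_zero := hf.deriv2_zero
  deriv_pos := hf.deriv_pos
  deriv2_pi := hf.deriv2_pi

namespace IsLoopSymbol

open Set

variable {f : ℝ → ℝ} (hf : IsLoopSymbol f)
include hf

theorem diagQuotient_pos {x : ℝ} (hx : x ∈ Icc 0 π) : 0 < diagQuotient f x := by
  rcases eq_endpoints_or_mem_Ioo_of_mem_Icc hx with rfl | rfl | hx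
  · simpa [diagQuotient] using hf.deriv2_zero
  · rw [diagQuotient, if_pos sin_pi, cos_pi]
    exact div_pos_of_neg_of_neg hf.deriv2_pi (by norm_num)
  · have hsin := sin_pos_of_mem_Ioo hx
    rw [diagQuotient_of_sin_ne_zero f hsin.ne']
    exact div_pos (hf.deriv_pos x hx) (mul_pos two_pos hsin)

theorem exists_pos_le_bSymb : ∃ m > 0, ∀ s ∈ Ioo 0 π, ∀ σ, m ≤ bSymb f σ s := by
  obtain ⟨m, hm, hle⟩ := isCompact_Icc.exists_forall_le'
    hf.continuous_diagQuotient.continuousOn fun _ => hf.diagQuotient_pos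
  refine ⟨m, hm, fun s hs σ => ?_⟩
  obtain ⟨ξ, hξ, -, hb⟩ := hf.exists_bSymb_eq_diagQuotient hs σ
  exact hb ▸ hle ξ (Ioo_subset_Icc_self hξ)

end IsLoopSymbol

theorem log_add_mul {a b h : ℝ} (ha : a ≠ 0) (hb : 1 + h * (b / a) ≠ 0) :
    log (a + h * b) = log a + log (1 + h * (b / a)) := by
  rw [← log_mul ha hb]
  congr 1
  field_simp

theorem psiF_eq_regularizedTransform {f g : ℝ → ℝ} {s C : ℝ} (hs : s ∈ Set.Ioo 0 π)
    (hq : CosLipschitzAt s C fun σ => bSymb g σ s / bSymb f σ s) :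
    psiF f g s = regularizedTransform (fun σ => bSymb g σ s / bSymb f σ s) s := by
  rw [← hq.pvIntegral2_eq hs, psiF]
  simp only [div_div]

theorem abs_etaF_add_const_mul_sub_le {f g : ℝ → ℝ} {s A B m N h : ℝ} (hs : s ∈ Set.Ioo 0 π)
    (hf : IsEvenSymbol f) (hg : IsEvenSymbol g) (hm : 0 < m) (hmf : ∀ σ, m ≤ bSymb f σ s)
    (hgN : ∀ σ, |bSymb g σ s| ≤ N) (hfA : CosLipschitzAt s A fun σ => bSymb f σ s)
    (hgB : CosLipschitzAt s B fun σ => bSymb g σ s) (hh : |h| * (N / m) ≤ 1 / 2) :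
    |etaF (fun θ => f θ + h * g θ) s - etaF f s - psiF f g s * h| ≤
      π * (N / m) * ((B + N / m * A) / m) * h ^ 2 := by
  have hquot (σ) : |bSymb g σ s / bSymb f σ s| ≤ N / m := by
    rw [abs_div, abs_of_pos (hm.trans_le (hmf σ))]
    exact div_le_div₀ ((abs_nonneg _).trans (hgN σ)) (hgN σ) hm (hmf σ)
  have hsmall (σ) : |h * (bSymb g σ s / bSymb f σ s)| ≤ |h| * (N / m) := by
    rw [abs_mul]
    exact mul_le_mul_of_nonneg_left (hquot σ) (abs_nonneg h)
  have hlog := hfA.log hm hmf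
  have hx := hgB.div hfA hm hmf (hquot s)
  have hrem := (hx.const_mul h).log_one_add_sub_self hh hsmall
  have hexpand (σ) : log (bSymb f σ s + h * bSymb g σ s) = log (bSymb f σ s) +
      (h * (bSymb g σ s / bSymb f σ s) + (log (1 + h * (bSymb g σ s / bSymb f σ s))
        - h * (bSymb g σ s / bSymb f σ s))) := by
    have hpos : 0 < 1 + h * (bSymb g σ s / bSymb f σ s) := by
      linarith [neg_le_of_abs_le (hsmall σ)]
    rw [add_sub_cancel, log_add_mul (hm.trans_le (hmf σ)).ne' hpos.ne']
  have hsin : sin s ≠ 0 := (sin_pos_of_mem_Ioo hs).ne'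
  have hη : etaF f s = regularizedTransform (fun σ => log (bSymb f σ s)) s :=
    hlog.pvIntegral2_eq hs
  have hηh : etaF (fun θ => f θ + h * g θ) s = etaF f s + (h * psiF f g s +
      regularizedTransform (fun σ => log (1 + h * (bSymb g σ s / bSymb f σ s))
        - h * (bSymb g σ s / bSymb f σ s)) s) := by
    rw [hη, psiF_eq_regularizedTransform hs hx, ← regularizedTransform_const_mul,
      ← (hx.const_mul h).regularizedTransform_add hrem hsin,
      ← hlog.regularizedTransform_add ((hx.const_mul h).add hrem) hsin]
    simp only [etaF, hf.bSymb_add_const_mul hg h hsin, hexpand]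
    exact (hlog.add ((hx.const_mul h).add hrem)).pvIntegral2_eq hs
  rw [hηh, mul_comm h, add_sub_cancel_left, add_sub_cancel_left]
  refine (hrem.abs_regularizedTransform_le hs).trans_eq ?_
  rw [← sq_abs h]
  ring

theorem eta_expansion_h_general {f g : ℝ → ℝ} (hf : IsLoopSymbol f) (hg : IsEvenSymbol g) :
    ∃ C > 0, ∀ᶠ h in 𝓝 (0 : ℝ), ∀ s ∈ Set.Ioo 0 π,
      |etaF (fun θ => f θ + h * g θ) s - etaF f s - psiF f g s * h| ≤ C * h ^ 2 := by
  obtain ⟨m, hm, hmf⟩ := hf.exists_pos_le_bSymb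
  obtain ⟨N, hgN⟩ := hg.exists_abs_bSymb_le
  obtain ⟨A, hfA⟩ := hf.exists_cosLipschitzAt_bSymb
  obtain ⟨B, hgB⟩ := hg.exists_cosLipschitzAt_bSymb
  have hsmall : ∀ᶠ h in 𝓝 (0 : ℝ), |h| * (N / m) < 1 / 2 :=
    (by fun_prop : ContinuousAt (fun h : ℝ => |h| * (N / m)) 0).eventually_lt_const (by simp)
  refine ⟨max (π * (N / m) * ((B + N / m * A) / m)) 1, by positivity, ?_⟩
  filter_upwards [hsmall] with h hh s hs
  refine (abs_etaF_add_const_mul_sub_le hs hf.toIsEvenSymbol hg hm (hmf s hs) (hgN s hs)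
    (hfA s hs) (hgB s hs) hh.le).trans ?_
  gcongr
  exact le_max_left _ _

open Real in
/-- Lemma 3.1(i) (Lemma `lm:eta`(i)): `η_{f+gh}(s) = η_f(s) + ψ(s)h + O(h²)`. -/
theorem eta_expansion_h (α : ℝ) (hα : 2 ≤ α) (f g : ℝ → ℝ)
    (hf : IsSimpleLoop α f) (hg : IsSimpleLoop α g)
    (hSL : ∀ n : ℕ, IsSimpleLoop α (fun θ => f θ + (1/(n+1:ℝ)) * g θ)) :
    ∃ C > (0:ℝ), ∃ N : ℕ, ∀ n ≥ N, ∀ s ∈ Set.Ioo (0:ℝ) π,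
      |etaF (fun θ => f θ + (1/(n+1:ℝ)) * g θ) s - etaF f s - psiF f g s * (1/(n+1:ℝ))|
        ≤ C * (1/(n+1:ℝ))^2 := by
  obtain ⟨C, hC, H⟩ := eta_expansion_h_general hf.isLoopSymbol hg.isLoopSymbol.toIsEvenSymbol
  exact ⟨C, hC, eventually_atTop.1 (tendsto_one_div_add_atTop_nhds_zero_nat.eventually H)⟩
end

section
/- Let f and g be symmetric simple-loop symbols of class SL^α with α ≥ 2 and let β > 0 be a constant (so that f + β·g is again a symmetric simple-loop symbol). Then there exists a constant κ > 0, depending only on f, g and β, such that for every n and every j = 1, …, n: |λ_j(T_n(f + β·g)) − f(d_{j,n}) − β·g(d_{j,n})| ≤ κ·h. -/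
open MeasureTheory Filter Real Topology

/-!
The matrix `T_n(cos)` is explicit: its eigenvalues are `cos d_j`, with sine vectors as eigenvectors.
For a symbol `u` whose derivative vanishes on `[0, π]` exactly like `sin`, the logarithmic
derivative of `u' / sin` is at most `2k / sin` for some `k`, so `u' / sin` times
`((1 + cos) / (1 - cos))^k` is decreasing. By Cauchy's mean value theorem
`(u - u(s)) (1 + cos)^k ≤ C (cos s - cos) (1 - cos)^k` pointwise, and a reflection gives the reverse
comparison. On the unit circle `(1 ± cos θ)^k` is, up to a constant, the squared modulus of the
polynomial `(1 ± z)^k`, so in the quadratic forms of Toeplitz matrices these weights are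
multiplications by polynomials of degree `k`, which cost `k` dimensions. Hence the `j`-th
eigenvalue of `T_n(u)` lies between `u(d_{j-k})` and `u(d_{j+k})`, and `u` is Lipschitz.
-/

section LinearAlgebra

variable {𝕜 E ι : Type*} [RCLike 𝕜] [NormedAddCommGroup E] [InnerProductSpace 𝕜 E]

lemma orthonormal_inv_norm_smul_of_eigenvectors {T : E →ₗ[𝕜] E} (hT : T.IsSymmetric) {μ : ι → 𝕜}
    (hμ : Function.Injective μ) {v : ι → E} (hv : ∀ i, v i ≠ 0) (hTv : ∀ i, T (v i) = μ i • v i) :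
    Orthonormal 𝕜 fun i => (‖v i‖⁻¹ : 𝕜) • v i := by
  refine ⟨fun i => by simpa [norm_smul] using inv_mul_cancel₀ (norm_ne_zero_iff.2 (hv i)),
    fun i j hij => ?_⟩
  have hinner : inner 𝕜 (v i) (v j) = 0 :=
    hT.orthogonalFamily_eigenspaces (hμ.ne hij) ⟨v i, Module.End.mem_eigenspace_iff.2 (hTv i)⟩
      ⟨v j, Module.End.mem_eigenspace_iff.2 (hTv j)⟩
  simp only [inner_smul_left, inner_smul_right, hinner, mul_zero]

lemma re_inner_apply_self_nonpos_of_mem_span [Finite ι] {T : E →ₗ[𝕜] E} {v : ι → E}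
    (hv : Orthonormal 𝕜 v) {μ : ι → ℝ} (hTv : ∀ i, T (v i) = (μ i : 𝕜) • v i)
    (hμ : ∀ i, μ i ≤ 0) {x : E} (hx : x ∈ Submodule.span 𝕜 (Set.range v)) :
    RCLike.re (inner 𝕜 x (T x)) ≤ 0 := by
  have := Fintype.ofFinite ι
  obtain ⟨c, rfl⟩ := (Submodule.mem_span_range_iff_exists_fun 𝕜).1 hx
  have hT : T (∑ i, c i • v i) = ∑ i, (c i * μ i) • v i := by
    simp only [map_sum, map_smul, hTv, smul_smul]
  rw [hT, hv.inner_sum, map_sum]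
  refine Finset.sum_nonpos fun i _ => ?_
  rw [← mul_assoc, RCLike.conj_mul, ← RCLike.ofReal_pow, ← RCLike.ofReal_mul, RCLike.ofReal_re]
  exact mul_nonpos_of_nonneg_of_nonpos (sq_nonneg _) (hμ i)

end LinearAlgebra

section Toeplitz

lemma integral_exp_neg_I_int_mul (k : ℤ) :
    ∫ θ in (0 : ℝ)..(2 * π), Complex.exp (-Complex.I * k * θ) =
      if k = 0 then (2 * π : ℂ) else 0 := by
  split_ifs with hk
  · simp [hk]
  · have hc : -Complex.I * (k : ℂ) ≠ 0 := by simp [hk]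
    have hperiod : Complex.exp (-Complex.I * k * (2 * π : ℝ)) = 1 :=
      Complex.exp_eq_one_iff.2 ⟨-k, by push_cast; ring⟩
    rw [integral_exp_mul_complex hc, hperiod]
    simp

lemma fCoeff_sub {u v : ℝ → ℝ} (hu : Continuous u) (hv : Continuous v) (k : ℤ) :
    fCoeff (fun θ => u θ - v θ) k = fCoeff u k - fCoeff v k := by
  rw [fCoeff, fCoeff, fCoeff, ← mul_sub, ← intervalIntegral.integral_sub
    (Continuous.intervalIntegrable (by fun_prop) _ _)
    (Continuous.intervalIntegrable (by fun_prop) _ _)]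
  simp only [Complex.ofReal_sub, sub_mul]

lemma fCoeff_const (c : ℝ) (k : ℤ) : fCoeff (fun _ => c) k = if k = 0 then (c : ℂ) else 0 := by
  have hπ : (π : ℂ) ≠ 0 := Complex.ofReal_ne_zero.2 pi_ne_zero
  rw [fCoeff, intervalIntegral.integral_const_mul, integral_exp_neg_I_int_mul]
  split_ifs
  · field_simp
  · ring

lemma fCoeff_cos (k : ℤ) :
    fCoeff cos k = (if k = 1 then 1 / 2 else 0) + if k = -1 then 1 / 2 else 0 := by
  have hπ : (π : ℂ) ≠ 0 := Complex.ofReal_ne_zero.2 pi_ne_zero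
  have hcos (θ : ℝ) : (cos θ : ℂ) * Complex.exp (-Complex.I * k * θ) =
      (Complex.exp (-Complex.I * (k - 1 : ℤ) * θ) +
        Complex.exp (-Complex.I * (k + 1 : ℤ) * θ)) / 2 := by
    rw [Complex.ofReal_cos, Complex.cos, div_mul_eq_mul_div, add_mul, ← Complex.exp_add,
      ← Complex.exp_add]
    push_cast
    ring_nf
  simp only [fCoeff, hcos]
  rw [intervalIntegral.integral_div, intervalIntegral.integral_add
    (Continuous.intervalIntegrable (by fun_prop) _ _)
    (Continuous.intervalIntegrable (by fun_prop) _ _), integral_exp_neg_I_int_mul,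
    integral_exp_neg_I_int_mul]
  simp only [sub_eq_zero, add_eq_zero_iff_eq_neg]
  split_ifs <;> field_simp <;> ring

lemma star_fCoeff (u : ℝ → ℝ) (k : ℤ) : star (fCoeff u k) = fCoeff u (-k) := by
  simp only [fCoeff, RCLike.star_def, map_mul, ← intervalIntegral.intervalIntegral_conj,
    ← Complex.exp_conj]
  simp [map_ofNat]

lemma toeplitz_isHermitian (u : ℝ → ℝ) (n : ℕ) : (toeplitz u n).IsHermitian := by
  ext i j
  rw [Matrix.conjTranspose_apply, toeplitz, Matrix.of_apply, Matrix.of_apply, star_fCoeff, neg_sub]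

lemma toeplitz_sub {u v : ℝ → ℝ} (hu : Continuous u) (hv : Continuous v) (n : ℕ) :
    toeplitz (fun θ => u θ - v θ) n = toeplitz u n - toeplitz v n := by
  ext i j
  exact fCoeff_sub hu hv _

lemma toeplitz_const (c : ℝ) (n : ℕ) : toeplitz (fun _ => c) n = (c : ℂ) • 1 := by
  ext i j
  simp [toeplitz, fCoeff_const, Matrix.one_apply, sub_eq_zero, Fin.ext_iff]

end Toeplitz

section QuadraticForm

open Polynomial

/-- The quadratic form `p ↦ ∫₀^{2π} w(θ) |p(e^{iθ})|² dθ` on polynomials; on those of degree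
less than `n` it is `2π` times the quadratic form of the Toeplitz matrix `T_n(w)`. -/
noncomputable def symbolForm (w : ℝ → ℝ) (p : ℂ[X]) : ℝ :=
  ∫ θ in (0 : ℝ)..(2 * π), w θ * ‖p.eval (Complex.exp (Complex.I * θ))‖ ^ 2

lemma symbolForm_const_mul (c : ℝ) (w : ℝ → ℝ) (p : ℂ[X]) :
    symbolForm (fun θ => c * w θ) p = c * symbolForm w p := by
  simp only [symbolForm, mul_assoc, intervalIntegral.integral_const_mul]

lemma symbolForm_add {w₁ w₂ : ℝ → ℝ} (hw₁ : Continuous w₁) (hw₂ : Continuous w₂) (p : ℂ[X]) :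
    symbolForm (fun θ => w₁ θ + w₂ θ) p = symbolForm w₁ p + symbolForm w₂ p := by
  simp only [symbolForm, add_mul]
  exact intervalIntegral.integral_add (Continuous.intervalIntegrable (by fun_prop) _ _)
    (Continuous.intervalIntegrable (by fun_prop) _ _)

lemma symbolForm_mul_le_symbolForm_mul {w₁ w₂ : ℝ → ℝ} (hw₁ : Continuous w₁)
    (hw₂ : Continuous w₂) {q₁ q₂ : ℂ[X]}
    (h : ∀ θ ∈ Set.Icc 0 (2 * π), w₁ θ * ‖q₁.eval (Complex.exp (Complex.I * θ))‖ ^ 2 ≤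
      w₂ θ * ‖q₂.eval (Complex.exp (Complex.I * θ))‖ ^ 2) (p : ℂ[X]) :
    symbolForm w₁ (q₁ * p) ≤ symbolForm w₂ (q₂ * p) := by
  refine intervalIntegral.integral_mono_on two_pi_pos.le
    (Continuous.intervalIntegrable (by fun_prop) _ _)
    (Continuous.intervalIntegrable (by fun_prop) _ _) fun θ hθ => ?_
  simp only [eval_mul, norm_mul, mul_pow, ← mul_assoc]
  exact mul_le_mul_of_nonneg_right (h θ hθ) (sq_nonneg _)

/-- The polynomial `∑ xᵢ Xⁱ` whose coefficients are the coordinates of `x`. -/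
noncomputable def vecPoly (n : ℕ) : EuclideanSpace ℂ (Fin n) ≃ₗ[ℂ] degreeLT ℂ n :=
  (WithLp.linearEquiv 2 ℂ (Fin n → ℂ)).trans (degreeLTEquiv ℂ n).symm

lemma eval_vecPoly {n : ℕ} (x : EuclideanSpace ℂ (Fin n)) (z : ℂ) :
    (vecPoly n x : ℂ[X]).eval z = ∑ i, x i * z ^ (i : ℕ) := by
  rw [eval_eq_sum_degreeLTEquiv (vecPoly n x).2]
  simp [vecPoly]

lemma normSq_eval_vecPoly {n : ℕ} (x : EuclideanSpace ℂ (Fin n)) (θ : ℝ) :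
    ((‖(vecPoly n x : ℂ[X]).eval (Complex.exp (Complex.I * θ))‖ ^ 2 : ℝ) : ℂ) =
      ∑ i, ∑ j, star (x i) * x j * Complex.exp (-Complex.I * ((i - j : ℤ) : ℂ) * θ) := by
  have hconj (i j : Fin n) : star (Complex.exp (Complex.I * θ) ^ (i : ℕ)) *
      Complex.exp (Complex.I * θ) ^ (j : ℕ) =
        Complex.exp (-Complex.I * ((i - j : ℤ) : ℂ) * θ) := by
    rw [RCLike.star_def, map_pow, ← Complex.exp_conj, ← Complex.exp_nat_mul, ← Complex.exp_nat_mul,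
      ← Complex.exp_add, map_mul, Complex.conj_I, Complex.conj_ofReal]
    push_cast
    ring_nf
  rw [Complex.ofReal_pow, ← Complex.conj_mul', ← RCLike.star_def, eval_vecPoly, star_sum,
    Finset.sum_mul_sum]
  refine Finset.sum_congr rfl fun i _ => Finset.sum_congr rfl fun j _ => ?_
  rw [← hconj, star_mul']
  ring

lemma inner_toeplitz_eq_symbolForm {u : ℝ → ℝ} (hu : Continuous u) {n : ℕ}
    (x : EuclideanSpace ℂ (Fin n)) :
    inner ℂ x (Matrix.toEuclideanLin (toeplitz u n) x) =
      ((1 / (2 * π) * symbolForm u (vecPoly n x) : ℝ) : ℂ) := by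
  have hform : ((symbolForm u (vecPoly n x) : ℝ) : ℂ) = ∑ i, ∑ j, star (x i) * x j *
      ∫ θ in (0 : ℝ)..(2 * π), (u θ : ℂ) * Complex.exp (-Complex.I * ((i - j : ℤ) : ℂ) * θ) := by
    simp only [symbolForm, ← intervalIntegral.integral_ofReal, Complex.ofReal_mul,
      normSq_eval_vecPoly, Finset.mul_sum, mul_left_comm (u _ : ℂ)]
    rw [intervalIntegral.integral_finsetSum fun i _ =>
      Continuous.intervalIntegrable (by fun_prop) _ _]
    refine Finset.sum_congr rfl fun i _ => ?_
    rw [intervalIntegral.integral_finsetSum fun j _ =>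
      Continuous.intervalIntegrable (by fun_prop) _ _]
    simp only [intervalIntegral.integral_const_mul]
  rw [Complex.ofReal_mul, hform, PiLp.inner_apply]
  simp only [Matrix.ofLp_toLpLin, Matrix.toLin'_apply, Matrix.mulVec, dotProduct, toeplitz,
    Matrix.of_apply, fCoeff, RCLike.inner_apply, Finset.mul_sum, Finset.sum_mul, RCLike.star_def]
  refine Finset.sum_congr rfl fun i _ => Finset.sum_congr rfl fun j _ => ?_
  push_cast
  ring

lemma symbolForm_one_pos {n : ℕ} {p : degreeLT ℂ n} (hp : p ≠ 0) :
    0 < symbolForm (fun _ => 1) p := by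
  obtain ⟨x, rfl⟩ := (vecPoly n).surjective p
  have hx : x ≠ 0 := fun h => hp (by rw [h, map_zero])
  have h := inner_toeplitz_eq_symbolForm (continuous_const (y := (1 : ℝ))) x
  rw [toeplitz_const, Complex.ofReal_one, one_smul, Matrix.toLpLin_one, LinearMap.id_apply,
    inner_self_eq_norm_sq_to_K] at h
  have hnorm : ‖x‖ ^ 2 = 1 / (2 * π) * symbolForm (fun _ => 1) (vecPoly n x) := by
    apply Complex.ofReal_injective
    rw [← h, Complex.ofReal_pow]
    rfl
  have hpos : 0 < ‖x‖ ^ 2 := by positivity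
  rw [hnorm] at hpos
  exact pos_of_mul_pos_right hpos (by positivity)

lemma finrank_degreeLT (𝕜 : Type*) [Field 𝕜] (n : ℕ) : Module.finrank 𝕜 (degreeLT 𝕜 n) = n := by
  rw [(degreeLTEquiv 𝕜 n).finrank_eq, Module.finrank_fin_fun]

/-- The form of `T_n(w)` is nonpositive on some subspace of dimension at least `d`, that is,
`T_n(w)` has at least `d` nonpositive eigenvalues. Vectors are encoded as polynomials of degree
less than `n`, so that a weight `|q(e^{iθ})|²` on `w` becomes multiplication by `q`. -/
def NonposDim (w : ℝ → ℝ) (n d : ℕ) : Prop :=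
  ∃ Z : Submodule ℂ (degreeLT ℂ n), d ≤ Module.finrank ℂ Z ∧ ∀ z ∈ Z, symbolForm w z ≤ 0

namespace NonposDim

lemma of_nonpos {w : ℝ → ℝ} (hw : ∀ θ ∈ Set.Icc 0 (2 * π), w θ ≤ 0) (n : ℕ) :
    NonposDim w n n := by
  refine ⟨⊤, by rw [finrank_top, finrank_degreeLT], fun z _ => ?_⟩
  rw [symbolForm, ← neg_nonneg, ← intervalIntegral.integral_neg]
  refine intervalIntegral.integral_nonneg two_pi_pos.le fun θ hθ => ?_
  exact neg_nonneg.2 (mul_nonpos_of_nonpos_of_nonneg (hw θ hθ) (sq_nonneg _))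

lemma of_le {w : ℝ → ℝ} {n d d' : ℕ} (h : NonposDim w n d') (hd : d ≤ d') : NonposDim w n d :=
  let ⟨Z, hZ, hw⟩ := h
  ⟨Z, hd.trans hZ, hw⟩

lemma const_mul {w : ℝ → ℝ} {n d : ℕ} {c : ℝ} (hc : 0 ≤ c) (h : NonposDim w n d) :
    NonposDim (fun θ => c * w θ) n d := by
  obtain ⟨Z, hd, hw⟩ := h
  refine ⟨Z, hd, fun z hz => ?_⟩
  rw [symbolForm_const_mul]
  exact mul_nonpos_of_nonneg_of_nonpos hc (hw z hz)

lemma of_eigenvectors {ι : Type*} {w : ℝ → ℝ} (hw : Continuous w) {n : ℕ}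
    {v : ι → EuclideanSpace ℂ (Fin n)} (hv : Orthonormal ℂ v) {μ : ι → ℝ}
    (hwv : ∀ i, Matrix.toEuclideanLin (toeplitz w n) (v i) = (μ i : ℂ) • v i) {s : Finset ι}
    (hμ : ∀ i ∈ s, μ i ≤ 0) : NonposDim w n s.card := by
  have hvs : Orthonormal ℂ fun i : s => v i := hv.comp _ Subtype.val_injective
  refine ⟨(Submodule.span ℂ (Set.range fun i : s => v i)).map (vecPoly n).toLinearMap, ?_, ?_⟩
  · rw [LinearEquiv.finrank_map_eq, finrank_span_eq_card hvs.linearIndependent, Fintype.card_coe]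
  · rintro _ ⟨x, hx, rfl⟩
    have h := re_inner_apply_self_nonpos_of_mem_span hvs (fun i => hwv i) (fun i => hμ i i.2) hx
    rw [inner_toeplitz_eq_symbolForm hw, RCLike.re_eq_complex_re, Complex.ofReal_re] at h
    exact nonpos_of_mul_nonpos_right h (by positivity)

lemma sub_const_of_eigenvectors {ι : Type*} {u : ℝ → ℝ} (hu : Continuous u) {n : ℕ}
    {v : ι → EuclideanSpace ℂ (Fin n)} (hv : Orthonormal ℂ v) {μ : ι → ℝ}
    (huv : ∀ i, Matrix.toEuclideanLin (toeplitz u n) (v i) = (μ i : ℂ) • v i) {s : Finset ι}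
    {c : ℝ} (hμ : ∀ i ∈ s, μ i ≤ c) : NonposDim (fun θ => u θ - c) n s.card := by
  refine of_eigenvectors (by fun_prop) hv (μ := fun i => μ i - c) (fun i => ?_)
    fun i hi => sub_nonpos.2 (hμ i hi)
  rw [toeplitz_sub hu continuous_const, toeplitz_const, map_sub, LinearMap.sub_apply, huv, map_smul,
    Matrix.toLpLin_one, LinearMap.smul_apply, LinearMap.id_apply, Complex.ofReal_sub, sub_smul]

lemma const_sub_of_eigenvectors {ι : Type*} {u : ℝ → ℝ} (hu : Continuous u) {n : ℕ}
    {v : ι → EuclideanSpace ℂ (Fin n)} (hv : Orthonormal ℂ v) {μ : ι → ℝ}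
    (huv : ∀ i, Matrix.toEuclideanLin (toeplitz u n) (v i) = (μ i : ℂ) • v i) {s : Finset ι}
    {c : ℝ} (hμ : ∀ i ∈ s, c ≤ μ i) : NonposDim (fun θ => c - u θ) n s.card := by
  refine of_eigenvectors (by fun_prop) hv (μ := fun i => c - μ i) (fun i => ?_)
    fun i hi => sub_nonpos.2 (hμ i hi)
  rw [toeplitz_sub continuous_const hu, toeplitz_const, map_sub, LinearMap.sub_apply, huv, map_smul,
    Matrix.toLpLin_one, LinearMap.smul_apply, LinearMap.id_apply, Complex.ofReal_sub, sub_smul]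

lemma le_of_lt_add {u : ℝ → ℝ} (hu : Continuous u) {n d₁ d₂ : ℕ} {a c : ℝ}
    (ha : NonposDim (fun θ => a - u θ) n d₁) (hc : NonposDim (fun θ => u θ - c) n d₂)
    (hd : n < d₁ + d₂) : a ≤ c := by
  obtain ⟨Z₁, hd₁, hZ₁⟩ := ha
  obtain ⟨Z₂, hd₂, hZ₂⟩ := hc
  have hinf : ¬Disjoint Z₁ Z₂ := fun h => by
    have := Submodule.finrank_add_finrank_le_of_disjoint h
    rw [finrank_degreeLT] at this
    omega
  obtain ⟨p, ⟨hp₁, hp₂⟩, hp⟩ := Submodule.exists_mem_ne_zero_of_ne_bot (mt disjoint_iff.2 hinf)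
  have hsum : symbolForm (fun θ => a - u θ) p + symbolForm (fun θ => u θ - c) p =
      (a - c) * symbolForm (fun _ => 1) p := by
    rw [← symbolForm_add (by fun_prop) (by fun_prop), ← symbolForm_const_mul]
    simp
  have hle : (a - c) * symbolForm (fun _ => 1) p ≤ 0 := hsum ▸ add_nonpos (hZ₁ p hp₁) (hZ₂ p hp₂)
  exact sub_nonpos.1 (nonpos_of_mul_nonpos_left hle (symbolForm_one_pos hp))

end NonposDim

/-- Multiplication by a polynomial of degree at most `k`, raising the degree bound by `k`. -/
noncomputable def mulDegreeLT {R : Type*} [CommRing R] {k : ℕ} {q : R[X]} (hq : q.degree ≤ k)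
    (m : ℕ) : degreeLT R m →ₗ[R] degreeLT R (m + k) :=
  ((LinearMap.mulLeft R q).comp (degreeLT R m).subtype).codRestrict _ fun p => by
    refine mem_degreeLT.2 ((degree_mul_le _ _).trans_lt ?_)
    rw [add_comm m, Nat.cast_add]
    exact (add_le_add_left hq _).trans_lt
      (WithBot.add_lt_add_left (WithBot.natCast_ne_bot k) (mem_degreeLT.1 p.2))

lemma coe_mulDegreeLT {R : Type*} [CommRing R] {k : ℕ} {q : R[X]} (hq : q.degree ≤ k) {m : ℕ}
    (p : degreeLT R m) : (mulDegreeLT hq m p : R[X]) = q * p := rfl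

lemma mulDegreeLT_injective {R : Type*} [CommRing R] [IsDomain R] {k : ℕ} {q : R[X]}
    (hq : q.degree ≤ k) (hq₀ : q ≠ 0) (m : ℕ) : Function.Injective (mulDegreeLT hq m) :=
  fun _ _ hab => Subtype.ext (mul_left_cancel₀ hq₀ (congrArg Subtype.val hab))

lemma finrank_comap_add_finrank_le {K V W : Type*} [Field K] [AddCommGroup V] [Module K V]
    [AddCommGroup W] [Module K W] [FiniteDimensional K W] {f : V →ₗ[K] W}
    (hf : Function.Injective f) (Z : Submodule K W) :
    Module.finrank K V + Module.finrank K Z ≤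
      Module.finrank K W + Module.finrank K (Z.comap f) := by
  have hinf := Submodule.finrank_sup_add_finrank_inf_eq (LinearMap.range f) Z
  rw [LinearMap.finrank_range_of_inj hf, ← Submodule.map_comap_eq,
    ← (Submodule.equivMapOfInjective f hf (Z.comap f)).finrank_eq] at hinf
  exact hinf ▸ Nat.add_le_add_right (Submodule.finrank_le _) _

/-- Pulling a subspace back along multiplication by `q₂`, and pushing the result forward along
multiplication by `q₁`, loses at most `k` dimensions. -/
lemma NonposDim.of_mul_normSq_le {w₁ w₂ : ℝ → ℝ} (hw₁ : Continuous w₁) (hw₂ : Continuous w₂)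
    {k : ℕ} {q₁ q₂ : ℂ[X]} (hq₁ : q₁ ≠ 0) (hq₂ : q₂ ≠ 0) (hk₁ : q₁.degree ≤ k)
    (hk₂ : q₂.degree ≤ k)
    (h : ∀ θ ∈ Set.Icc 0 (2 * π), w₁ θ * ‖q₁.eval (Complex.exp (Complex.I * θ))‖ ^ 2 ≤
      w₂ θ * ‖q₂.eval (Complex.exp (Complex.I * θ))‖ ^ 2)
    {n d : ℕ} (hd : NonposDim w₂ n (d + k)) : NonposDim w₁ n d := by
  obtain ⟨V, hdV, hV⟩ := hd
  obtain ⟨m, rfl⟩ : ∃ m, n = m + k := by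
    have hVn := V.finrank_le
    rw [finrank_degreeLT] at hVn
    exact Nat.exists_eq_add_of_le' (by omega)
  refine ⟨(V.comap (mulDegreeLT hk₂ m)).map (mulDegreeLT hk₁ m), ?_, ?_⟩
  · have hloss := finrank_comap_add_finrank_le (mulDegreeLT_injective hk₂ hq₂ m) V
    rw [finrank_degreeLT, finrank_degreeLT] at hloss
    rw [← (Submodule.equivMapOfInjective _ (mulDegreeLT_injective hk₁ hq₁ m) _).finrank_eq]
    omega
  · rintro _ ⟨p, hp, rfl⟩
    have hp₂ := hV _ (Submodule.mem_comap.1 hp)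
    rw [coe_mulDegreeLT] at hp₂ ⊢
    exact (symbolForm_mul_le_symbolForm_mul hw₁ hw₂ h p).trans hp₂

end QuadraticForm

section Eigenvalues

variable {u : ℝ → ℝ} {n : ℕ}

lemma sortedEigs_monotone {A : Matrix (Fin n) (Fin n) ℂ} (hA : A.IsHermitian) :
    Monotone (sortedEigs hA) :=
  Tuple.monotone_sort _

lemma toEuclideanLin_eigenvectorBasis_sort {A : Matrix (Fin n) (Fin n) ℂ} (hA : A.IsHermitian)
    (i : Fin n) : Matrix.toEuclideanLin A (hA.eigenvectorBasis (Tuple.sort hA.eigenvalues i)) =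
      (sortedEigs hA i : ℂ) • hA.eigenvectorBasis (Tuple.sort hA.eigenvalues i) := by
  apply WithLp.ofLp_injective
  rw [Matrix.ofLp_toLpLin, Matrix.toLin'_apply, hA.mulVec_eigenvectorBasis]
  rfl

lemma orthonormal_eigenvectorBasis_sort {A : Matrix (Fin n) (Fin n) ℂ} (hA : A.IsHermitian) :
    Orthonormal ℂ (hA.eigenvectorBasis ∘ Tuple.sort hA.eigenvalues) :=
  hA.eigenvectorBasis.orthonormal.comp _ (Equiv.injective _)

lemma sortedEigs_le (hu : Continuous u) (hA : (toeplitz u n).IsHermitian) {j : Fin n} {c : ℝ}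
    (h : NonposDim (fun θ => u θ - c) n (j + 1)) : sortedEigs hA j ≤ c := by
  have hj := NonposDim.const_sub_of_eigenvectors hu (orthonormal_eigenvectorBasis_sort hA)
    (toEuclideanLin_eigenvectorBasis_sort hA) (s := Finset.Ici j)
    fun i hi => sortedEigs_monotone hA (Finset.mem_Ici.1 hi)
  rw [Fin.card_Ici] at hj
  exact hj.le_of_lt_add hu h (by omega)

lemma le_sortedEigs (hu : Continuous u) (hA : (toeplitz u n).IsHermitian) {j : Fin n} {c : ℝ}
    (h : NonposDim (fun θ => c - u θ) n (n - j)) : c ≤ sortedEigs hA j := by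
  have hj := NonposDim.sub_const_of_eigenvectors hu (orthonormal_eigenvectorBasis_sort hA)
    (toEuclideanLin_eigenvectorBasis_sort hA) (s := Finset.Iic j)
    fun i hi => sortedEigs_monotone hA (Finset.mem_Iic.1 hi)
  rw [Fin.card_Iic] at hj
  exact h.le_of_lt_add hu hj (by omega)

end Eigenvalues

section Cosine

variable {n : ℕ}

/-- The node `d_{j+1,n} = (j+1)π/(n+1)`; the index `j` starts at `0`, as in `Fin n`. -/
noncomputable def node (n j : ℕ) : ℝ := (j + 1) * π * (1 / (n + 1))

lemma node_pos (n j : ℕ) : 0 < node n j := by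
  unfold node
  positivity

lemma node_sub_node (n i j : ℕ) : node n i - node n j = (i - j) * π * (1 / (n + 1)) := by
  unfold node
  ring

lemma node_lt_pi {j : ℕ} (hj : j < n) : node n j < π := by
  have hj' : (j + 1 : ℝ) < n + 1 := by exact_mod_cast Nat.succ_lt_succ hj
  rw [node, mul_one_div, div_lt_iff₀ (by positivity), mul_comm]
  exact mul_lt_mul_of_pos_left hj' pi_pos

lemma node_mem_Ioo {j : ℕ} (hj : j < n) : node n j ∈ Set.Ioo 0 π :=
  ⟨node_pos n j, node_lt_pi hj⟩

lemma node_strictMono (n : ℕ) : StrictMono (node n) := fun i j hij => by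
  unfold node
  gcongr

lemma cos_node_strictAnti (n : ℕ) : StrictAnti fun j : Fin n => cos (node n j) := fun i j hij =>
  strictAntiOn_cos (Set.Ioo_subset_Icc_self (node_mem_Ioo i.2))
    (Set.Ioo_subset_Icc_self (node_mem_Ioo j.2)) (node_strictMono n hij)

lemma toeplitz_cos_mulVec {F : ℕ → ℂ} (h₀ : F 0 = 0) (hn : F (n + 1) = 0) (l : Fin n) :
    (toeplitz cos n).mulVec (fun m => F (m + 1)) l = (F l + F (l + 2)) / 2 := by
  have hsum : (toeplitz cos n).mulVec (fun m => F (m + 1)) l =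
      ∑ m ∈ Finset.range (n + 2), fCoeff cos (l + 1 - m) * F m := by
    rw [Finset.sum_range_succ, hn, Finset.sum_range_succ', h₀, Finset.sum_range]
    simp [Matrix.mulVec, dotProduct, toeplitz]
  have hlower (m : ℕ) : ((l : ℤ) + 1 - m = 1) ↔ m = l := by omega
  have hupper (m : ℕ) : ((l : ℤ) + 1 - m = -1) ↔ m = l + 2 := by omega
  rw [hsum]
  simp only [fCoeff_cos, hlower, hupper, add_mul, ite_mul, zero_mul, Finset.sum_add_distrib,
    Finset.sum_ite_eq', Finset.mem_range]
  rw [if_pos (by omega), if_pos (by omega)]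
  ring

/-- The eigenvector `(sin t, sin 2t, …, sin nt)` of `T_n(cos)`, where `t` is a node. -/
noncomputable def sineVec (n : ℕ) (t : ℝ) : EuclideanSpace ℂ (Fin n) :=
  WithLp.toLp 2 fun m => (sin ((m + 1 : ℕ) * t) : ℂ)

lemma toEuclideanLin_toeplitz_cos_sineVec {t : ℝ} (ht : sin ((n + 1 : ℕ) * t) = 0) :
    Matrix.toEuclideanLin (toeplitz cos n) (sineVec n t) = (cos t : ℂ) • sineVec n t := by
  ext l
  have hsin : (sin ((l : ℕ) * t) + sin ((l + 2 : ℕ) * t)) / 2 =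
      cos t * sin ((l + 1 : ℕ) * t) := by
    have h₁ : ((l : ℕ) : ℝ) * t = (l + 1 : ℕ) * t - t := by push_cast; ring
    have h₂ : ((l + 2 : ℕ) : ℝ) * t = (l + 1 : ℕ) * t + t := by push_cast; ring
    rw [h₁, h₂, sin_sub, sin_add]
    ring
  rw [Matrix.ofLp_toLpLin, Matrix.toLin'_apply, PiLp.smul_apply, smul_eq_mul]
  refine (toeplitz_cos_mulVec (F := fun m => (sin (m * t) : ℂ)) (by simp)
    (by rw [ht, Complex.ofReal_zero]) l).trans ?_
  simpa only [Complex.ofReal_div, Complex.ofReal_add, Complex.ofReal_mul, Complex.ofReal_ofNat,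
    sineVec] using congrArg Complex.ofReal hsin

lemma sineVec_ne_zero {t : ℝ} (hn : 0 < n) (ht : t ∈ Set.Ioo 0 π) : sineVec n t ≠ 0 := fun h => by
  have h₀ := congrArg (fun x : EuclideanSpace ℂ (Fin n) => x ⟨0, hn⟩) h
  refine (sin_pos_of_mem_Ioo ht).ne' ?_
  simpa [sineVec, -Complex.ofReal_sin] using h₀

/-- The normalized sine vectors at the nodes: an orthonormal eigenbasis of `T_n(cos)`. -/
noncomputable def sineBasis (n : ℕ) (j : Fin n) : EuclideanSpace ℂ (Fin n) :=
  (‖sineVec n (node n j)‖⁻¹ : ℂ) • sineVec n (node n j)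

lemma toEuclideanLin_toeplitz_cos_sineVec_node (j : Fin n) :
    Matrix.toEuclideanLin (toeplitz cos n) (sineVec n (node n j)) =
      (cos (node n j) : ℂ) • sineVec n (node n j) := by
  refine toEuclideanLin_toeplitz_cos_sineVec ?_
  have hnode : ((n + 1 : ℕ) : ℝ) * node n j = (j + 1 : ℕ) * π := by
    rw [node]
    push_cast
    field_simp
  rw [hnode, sin_nat_mul_pi]

lemma toEuclideanLin_toeplitz_cos_sineBasis (j : Fin n) :
    Matrix.toEuclideanLin (toeplitz cos n) (sineBasis n j) =
      (cos (node n j) : ℂ) • sineBasis n j := by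
  rw [sineBasis, map_smul, toEuclideanLin_toeplitz_cos_sineVec_node, smul_comm]

lemma orthonormal_sineBasis (n : ℕ) : Orthonormal ℂ (sineBasis n) :=
  orthonormal_inv_norm_smul_of_eigenvectors
    (Matrix.isSymmetric_toEuclideanLin_iff.2 (toeplitz_isHermitian cos n))
    (Complex.ofReal_injective.comp (cos_node_strictAnti n).injective)
    (fun j => sineVec_ne_zero j.pos (node_mem_Ioo j.2))
    toEuclideanLin_toeplitz_cos_sineVec_node

lemma nonposDim_cos_node_sub_cos {j : ℕ} (hj : j < n) :
    NonposDim (fun θ => cos (node n j) - cos θ) n (j + 1) := by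
  have h := NonposDim.const_sub_of_eigenvectors continuous_cos (orthonormal_sineBasis n)
    toEuclideanLin_toeplitz_cos_sineBasis (s := Finset.Iic ⟨j, hj⟩)
    fun i hi => (cos_node_strictAnti n).antitone (Finset.mem_Iic.1 hi)
  rwa [Fin.card_Iic] at h

lemma nonposDim_cos_sub_cos_node {j : ℕ} (hj : j < n) :
    NonposDim (fun θ => cos θ - cos (node n j)) n (n - j) := by
  have h := NonposDim.sub_const_of_eigenvectors continuous_cos (orthonormal_sineBasis n)
    toEuclideanLin_toeplitz_cos_sineBasis (s := Finset.Ici ⟨j, hj⟩)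
    fun i hi => (cos_node_strictAnti n).antitone (Finset.mem_Ici.1 hi)
  rwa [Fin.card_Ici] at h

end Cosine

section Comparison

open Set

/-- The weight `cot^{2k}(θ/2)`. -/
noncomputable def cotHalfPow (k : ℕ) (θ : ℝ) : ℝ := ((1 + cos θ) / (1 - cos θ)) ^ k

lemma one_sub_cos_pos {θ : ℝ} (hθ : θ ∈ Ioo 0 π) : 0 < 1 - cos θ := by
  have := strictAntiOn_cos (left_mem_Icc.2 pi_pos.le) (Ioo_subset_Icc_self hθ) hθ.1
  rw [cos_zero] at this
  exact sub_pos.2 this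

lemma one_add_cos_pos {θ : ℝ} (hθ : θ ∈ Ioo 0 π) : 0 < 1 + cos θ := by
  have := strictAntiOn_cos (Ioo_subset_Icc_self hθ) (right_mem_Icc.2 pi_pos.le) hθ.2
  rw [cos_pi] at this
  exact neg_lt_iff_pos_add'.1 this

lemma cotHalfPow_pos (k : ℕ) {θ : ℝ} (hθ : θ ∈ Ioo 0 π) : 0 < cotHalfPow k θ :=
  pow_pos (div_pos (one_add_cos_pos hθ) (one_sub_cos_pos hθ)) k

lemma cotHalfPow_mul_one_sub_cos_pow (k : ℕ) {θ : ℝ} (hθ : θ ∈ Ioo 0 π) :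
    cotHalfPow k θ * (1 - cos θ) ^ k = (1 + cos θ) ^ k := by
  rw [cotHalfPow, ← mul_pow, div_mul_cancel₀ _ (one_sub_cos_pos hθ).ne']

lemma hasDerivAt_cotHalfPow (k : ℕ) {θ : ℝ} (hθ : θ ∈ Ioo 0 π) :
    HasDerivAt (cotHalfPow k) (-(2 * k / sin θ * cotHalfPow k θ)) θ := by
  have hsub : 1 - cos θ ≠ 0 := (one_sub_cos_pos hθ).ne'
  have hsin : sin θ ≠ 0 := (sin_pos_of_mem_Ioo hθ).ne'
  have hratio : HasDerivAt (fun θ => (1 + cos θ) / (1 - cos θ))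
      (-(2 / sin θ * ((1 + cos θ) / (1 - cos θ)))) θ := by
    refine (((hasDerivAt_cos θ).const_add 1).fun_div
      ((hasDerivAt_cos θ).const_sub 1) hsub).congr_deriv ?_
    field_simp
    linear_combination (-2) * sin_sq_add_cos_sq θ
  refine (hratio.fun_pow k).congr_deriv ?_
  rcases k with _ | k
  · simp
  · rw [cotHalfPow, pow_succ, Nat.add_sub_cancel]
    ring

lemma antitoneOn_mul_cotHalfPow {q q' : ℝ → ℝ} {k : ℕ}
    (hq : ∀ θ ∈ Ioo 0 π, HasDerivAt q (q' θ) θ)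
    (hq' : ∀ θ ∈ Ioo 0 π, sin θ * q' θ ≤ 2 * k * q θ) :
    AntitoneOn (fun θ => q θ * cotHalfPow k θ) (Ioo 0 π) := by
  have hder (θ : ℝ) (hθ : θ ∈ Ioo 0 π) := (hq θ hθ).fun_mul (hasDerivAt_cotHalfPow k hθ)
  refine antitoneOn_of_deriv_nonpos (convex_Ioo _ _)
    (fun θ hθ => (hder θ hθ).continuousAt.continuousWithinAt)
    (fun θ hθ => (hder θ (interior_subset hθ)).differentiableAt.differentiableWithinAt)
    fun θ hθ => ?_
  rw [interior_Ioo] at hθ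
  have hsin := sin_pos_of_mem_Ioo hθ
  have hfactor : q' θ * cotHalfPow k θ + q θ * -(2 * k / sin θ * cotHalfPow k θ) =
      (sin θ * q' θ - 2 * k * q θ) * (cotHalfPow k θ / sin θ) := by
    field_simp
    ring
  rw [(hder θ hθ).deriv, hfactor]
  exact mul_nonpos_of_nonpos_of_nonneg (sub_nonpos.2 (hq' θ hθ))
    (div_pos (cotHalfPow_pos k hθ) hsin).le

lemma antitoneOn_cotHalfPow (k : ℕ) : AntitoneOn (cotHalfPow k) (Ioo 0 π) := by
  simpa using antitoneOn_mul_cotHalfPow (k := k) (fun θ _ => hasDerivAt_const θ (1 : ℝ))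
    fun θ _ => by simp

/-- On `(0, π)` the function `u` is nondecreasing and the logarithmic derivative of `u' / sin` is
at most `2k / sin` in absolute value; the condition is written without divisions. -/
structure BoundedLogSlope (u : ℝ → ℝ) (k : ℕ) : Prop where
  contDiff : ContDiff ℝ 2 u
  deriv_nonneg : ∀ θ ∈ Ioo 0 π, 0 ≤ deriv u θ
  abs_le_deriv : ∀ θ ∈ Ioo 0 π,
    |sin θ * deriv (deriv u) θ - cos θ * deriv u θ| ≤ 2 * k * deriv u θ

namespace BoundedLogSlope

variable {u : ℝ → ℝ} {k : ℕ}

lemma hasDerivAt (hu : BoundedLogSlope u k) (θ : ℝ) : HasDerivAt u (deriv u θ) θ :=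
  (hu.contDiff.differentiable two_ne_zero θ).hasDerivAt

lemma hasDerivAt_deriv (hu : BoundedLogSlope u k) (θ : ℝ) :
    HasDerivAt (deriv u) (deriv (deriv u) θ) θ :=
  (hu.contDiff.differentiable_deriv_two θ).hasDerivAt

lemma neg_comp_pi_sub (hu : BoundedLogSlope u k) : BoundedLogSlope (fun θ => -u (π - θ)) k := by
  have hmem {θ : ℝ} (hθ : θ ∈ Ioo 0 π) : π - θ ∈ Ioo 0 π :=
    ⟨sub_pos.2 hθ.2, sub_lt_self _ hθ.1⟩
  have hderiv : deriv (fun θ => -u (π - θ)) = fun θ => deriv u (π - θ) := by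
    ext θ
    rw [deriv.fun_neg, deriv_comp_const_sub, neg_neg]
  refine ⟨(hu.contDiff.comp (contDiff_const.sub contDiff_id)).neg, fun θ hθ => ?_, fun θ hθ => ?_⟩
  · rw [hderiv]
    exact hu.deriv_nonneg _ (hmem hθ)
  · have h := hu.abs_le_deriv _ (hmem hθ)
    rw [hderiv, deriv_comp_const_sub, ← abs_neg]
    rw [sin_pi_sub, cos_pi_sub] at h
    convert h using 2
    ring

lemma antitoneOn_slope_mul_cotHalfPow (hu : BoundedLogSlope u k) :
    AntitoneOn (fun θ => deriv u θ / sin θ * cotHalfPow k θ) (Ioo 0 π) := by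
  refine antitoneOn_mul_cotHalfPow (fun θ hθ => (hu.hasDerivAt_deriv θ).fun_div
    (hasDerivAt_sin θ) (sin_pos_of_mem_Ioo hθ).ne') fun θ hθ => ?_
  have hsin := sin_pos_of_mem_Ioo hθ
  have h := (abs_le.1 (hu.abs_le_deriv θ hθ)).2
  rw [pow_two, ← mul_div_assoc, mul_div_mul_left _ _ hsin.ne', ← mul_div_assoc,
    mul_comm (deriv (deriv u) θ), mul_comm (deriv u θ) (cos θ)]
  gcongr

lemma exists_slope_eq (hu : BoundedLogSlope u k) {a b : ℝ} (ha : 0 < a) (hab : a < b) (hb : b < π) :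
    ∃ ξ ∈ Ioo a b, u b - u a = (cos a - cos b) * (deriv u ξ / sin ξ) := by
  obtain ⟨ξ, hξ, h⟩ := exists_ratio_hasDerivAt_eq_ratio_slope u (deriv u) hab
    hu.contDiff.continuous.continuousOn (fun θ _ => hu.hasDerivAt θ) (fun θ => -cos θ) sin
    continuous_cos.neg.continuousOn fun θ _ => by simpa using (hasDerivAt_cos θ).fun_neg
  have hsin := sin_pos_of_mem_Ioo ⟨ha.trans hξ.1, hξ.2.trans hb⟩
  refine ⟨ξ, hξ, ?_⟩
  field_simp
  linear_combination -h

lemma sub_mul_cotHalfPow_le (hu : BoundedLogSlope u k) {θ s : ℝ} (hθ : θ ∈ Ioo 0 π)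
    (hs : s ∈ Ioo 0 π) : (u θ - u s) * cotHalfPow k θ ≤
      deriv u s / sin s * cotHalfPow k s * (cos s - cos θ) := by
  have hslope {ξ : ℝ} (hξ : ξ ∈ Ioo 0 π) : 0 ≤ deriv u ξ / sin ξ :=
    div_nonneg (hu.deriv_nonneg ξ hξ) (sin_pos_of_mem_Ioo hξ).le
  have hcos {a b : ℝ} (ha : a ∈ Ioo 0 π) (hb : b ∈ Ioo 0 π) (hab : a < b) : 0 ≤ cos a - cos b :=
    sub_nonneg.2 (cos_le_cos_of_nonneg_of_le_pi ha.1.le hb.2.le hab.le)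
  rcases lt_trichotomy θ s with h | rfl | h
  · obtain ⟨ξ, hξ, hslope_eq⟩ := hu.exists_slope_eq hθ.1 h hs.2
    have hξπ : ξ ∈ Ioo 0 π := ⟨hθ.1.trans hξ.1, hξ.2.trans hs.2⟩
    have hle : deriv u s / sin s * cotHalfPow k s ≤ deriv u ξ / sin ξ * cotHalfPow k θ :=
      (hu.antitoneOn_slope_mul_cotHalfPow hξπ hs hξ.2.le).trans
        (mul_le_mul_of_nonneg_left (antitoneOn_cotHalfPow k hθ hξπ hξ.1.le) (hslope hξπ))
    have hcosθ := hcos hθ hs h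
    linear_combination (cos θ - cos s) * hle - cotHalfPow k θ * hslope_eq
  · simp
  · obtain ⟨ξ, hξ, hslope_eq⟩ := hu.exists_slope_eq hs.1 h hθ.2
    have hξπ : ξ ∈ Ioo 0 π := ⟨hs.1.trans hξ.1, hξ.2.trans hθ.2⟩
    have hle : deriv u ξ / sin ξ * cotHalfPow k θ ≤ deriv u s / sin s * cotHalfPow k s :=
      (mul_le_mul_of_nonneg_left (antitoneOn_cotHalfPow k hξπ hθ hξ.2.le) (hslope hξπ)).trans
        (hu.antitoneOn_slope_mul_cotHalfPow hs hξπ hξ.1.le)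
    have hcosθ := hcos hs hθ h
    linear_combination (cos s - cos θ) * hle + cotHalfPow k θ * hslope_eq

lemma exists_sub_mul_le (hu : BoundedLogSlope u k) {s : ℝ} (hs : s ∈ Ioo 0 π) :
    ∃ C ≥ 0, ∀ θ ∈ Icc 0 π,
      (u θ - u s) * (1 + cos θ) ^ k ≤ C * (cos s - cos θ) * (1 - cos θ) ^ k := by
  have hcont := hu.contDiff.continuous
  refine ⟨deriv u s / sin s * cotHalfPow k s, mul_nonneg (div_nonneg (hu.deriv_nonneg s hs)
    (sin_pos_of_mem_Ioo hs).le) (cotHalfPow_pos k hs).le, fun θ hθ => ?_⟩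
  rw [← closure_Ioo pi_ne_zero.symm] at hθ
  refine le_on_closure (f := fun θ => (u θ - u s) * (1 + cos θ) ^ k)
    (g := fun θ => deriv u s / sin s * cotHalfPow k s * (cos s - cos θ) * (1 - cos θ) ^ k)
    (fun θ hθ => ?_) (by fun_prop) (by fun_prop) hθ
  rw [← cotHalfPow_mul_one_sub_cos_pow k hθ, ← mul_assoc]
  exact mul_le_mul_of_nonneg_right (hu.sub_mul_cotHalfPow_le hθ hs)
    (pow_nonneg (one_sub_cos_pos hθ).le k)

lemma exists_const_sub_mul_le (hu : BoundedLogSlope u k) {s : ℝ} (hs : s ∈ Ioo 0 π) :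
    ∃ C ≥ 0, ∀ θ ∈ Icc 0 π,
      (u s - u θ) * (1 - cos θ) ^ k ≤ C * (cos θ - cos s) * (1 + cos θ) ^ k := by
  obtain ⟨C, hC, h⟩ := hu.neg_comp_pi_sub.exists_sub_mul_le
    (s := π - s) ⟨sub_pos.2 hs.2, sub_lt_self _ hs.1⟩
  refine ⟨C, hC, fun θ hθ => ?_⟩
  have hθ' := h (π - θ) ⟨sub_nonneg.2 hθ.2, sub_le_self _ hθ.1⟩
  simp only [sub_sub_cancel, cos_pi_sub] at hθ'
  ring_nf at hθ' ⊢
  exact hθ'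

end BoundedLogSlope

end Comparison

section Localization

open Set Polynomial

lemma normSq_one_add_exp (θ : ℝ) : ‖1 + Complex.exp (Complex.I * θ)‖ ^ 2 = 2 * (1 + cos θ) := by
  rw [mul_comm, Complex.exp_mul_I, ← Complex.ofReal_cos, ← Complex.ofReal_sin, ← add_assoc,
    ← Complex.ofReal_one, ← Complex.ofReal_add, ← Complex.normSq_eq_norm_sq,
    Complex.normSq_add_mul_I]
  linear_combination sin_sq_add_cos_sq θ

lemma normSq_one_sub_exp (θ : ℝ) : ‖1 - Complex.exp (Complex.I * θ)‖ ^ 2 = 2 * (1 - cos θ) := by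
  have h := normSq_one_add_exp (θ + π)
  rwa [Complex.ofReal_add, mul_add, mul_comm Complex.I π, Complex.exp_add, Complex.exp_pi_mul_I,
    mul_neg_one, cos_add_pi, ← sub_eq_add_neg, ← sub_eq_add_neg] at h

lemma normSq_eval_one_add_X_pow (k : ℕ) (θ : ℝ) :
    ‖((1 + X : ℂ[X]) ^ k).eval (Complex.exp (Complex.I * θ))‖ ^ 2 = 2 ^ k * (1 + cos θ) ^ k := by
  rw [eval_pow, norm_pow, pow_right_comm, eval_add, eval_one, eval_X, normSq_one_add_exp, mul_pow]

lemma normSq_eval_one_sub_X_pow (k : ℕ) (θ : ℝ) :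
    ‖((1 - X : ℂ[X]) ^ k).eval (Complex.exp (Complex.I * θ))‖ ^ 2 = 2 ^ k * (1 - cos θ) ^ k := by
  rw [eval_pow, norm_pow, pow_right_comm, eval_sub, eval_one, eval_X, normSq_one_sub_exp, mul_pow]

lemma degree_one_add_X_pow (R : Type*) [CommRing R] [IsDomain R] (k : ℕ) :
    ((1 + X : R[X]) ^ k).degree = k := by
  rw [degree_pow, ← C_1, add_comm, degree_X_add_C, nsmul_one]

lemma degree_one_sub_X_pow (R : Type*) [CommRing R] [IsDomain R] (k : ℕ) :
    ((1 - X : R[X]) ^ k).degree = k := by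
  rw [degree_pow, ← C_1, ← neg_sub, degree_neg, degree_X_sub_C, nsmul_one]

lemma forall_mem_Icc_two_pi_of_symm {p : ℝ → Prop} (hp : ∀ θ, p (2 * π - θ) → p θ)
    (h : ∀ θ ∈ Icc 0 π, p θ) : ∀ θ ∈ Icc 0 (2 * π), p θ := fun θ hθ => by
  rcases le_total θ π with hθπ | hθπ
  · exact h θ ⟨hθ.1, hθπ⟩
  · exact hp θ (h _ ⟨sub_nonneg.2 hθ.2, by linarith⟩)

namespace BoundedLogSlope

variable {u : ℝ → ℝ} {k n d : ℕ} {s : ℝ}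

lemma nonposDim_sub_const (hu : BoundedLogSlope u k) (hsymm : ∀ θ, u (2 * π - θ) = u θ)
    (hs : s ∈ Ioo 0 π) (hd : NonposDim (fun θ => cos s - cos θ) n (d + k)) :
    NonposDim (fun θ => u θ - u s) n d := by
  have hcont := hu.contDiff.continuous
  obtain ⟨C, hC, hle⟩ := hu.exists_sub_mul_le hs
  refine (hd.const_mul hC).of_mul_normSq_le (by fun_prop) (by fun_prop)
    (fun h₀ => by simpa [h₀] using degree_one_add_X_pow ℂ k)
    (fun h₀ => by simpa [h₀] using degree_one_sub_X_pow ℂ k)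
    (degree_one_add_X_pow ℂ k).le (degree_one_sub_X_pow ℂ k).le ?_
  simp only [normSq_eval_one_add_X_pow, normSq_eval_one_sub_X_pow]
  refine forall_mem_Icc_two_pi_of_symm (fun θ h => ?_) fun θ hθ => ?_
  · rwa [hsymm, cos_two_pi_sub] at h
  · linear_combination 2 ^ k * hle θ hθ

lemma nonposDim_const_sub (hu : BoundedLogSlope u k) (hsymm : ∀ θ, u (2 * π - θ) = u θ)
    (hs : s ∈ Ioo 0 π) (hd : NonposDim (fun θ => cos θ - cos s) n (d + k)) :
    NonposDim (fun θ => u s - u θ) n d := by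
  have hcont := hu.contDiff.continuous
  obtain ⟨C, hC, hle⟩ := hu.exists_const_sub_mul_le hs
  refine (hd.const_mul hC).of_mul_normSq_le (by fun_prop) (by fun_prop)
    (fun h₀ => by simpa [h₀] using degree_one_sub_X_pow ℂ k)
    (fun h₀ => by simpa [h₀] using degree_one_add_X_pow ℂ k)
    (degree_one_sub_X_pow ℂ k).le (degree_one_add_X_pow ℂ k).le ?_
  simp only [normSq_eval_one_add_X_pow, normSq_eval_one_sub_X_pow]
  refine forall_mem_Icc_two_pi_of_symm (fun θ h => ?_) fun θ hθ => ?_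
  · rwa [hsymm, cos_two_pi_sub] at h
  · linear_combination 2 ^ k * hle θ hθ

lemma monotoneOn (hu : BoundedLogSlope u k) : MonotoneOn u (Icc 0 π) :=
  monotoneOn_of_deriv_nonneg (convex_Icc 0 π) hu.contDiff.continuous.continuousOn
    (hu.contDiff.differentiable two_ne_zero).differentiableOn
    fun θ hθ => hu.deriv_nonneg θ (by rwa [interior_Icc] at hθ)

lemma sortedEigs_le_pi (hu : BoundedLogSlope u k) (hsymm : ∀ θ, u (2 * π - θ) = u θ)
    (j : Fin n) : sortedEigs (toeplitz_isHermitian u n) j ≤ u π := by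
  have hle : ∀ θ ∈ Icc 0 (2 * π), u θ ≤ u π :=
    forall_mem_Icc_two_pi_of_symm (fun θ h => hsymm θ ▸ h)
      fun θ hθ => hu.monotoneOn hθ (right_mem_Icc.2 pi_pos.le) hθ.2
  exact sortedEigs_le hu.contDiff.continuous _
    ((NonposDim.of_nonpos (fun θ hθ => sub_nonpos.2 (hle θ hθ)) n).of_le (by omega))

lemma zero_le_sortedEigs (hu : BoundedLogSlope u k) (hsymm : ∀ θ, u (2 * π - θ) = u θ)
    (j : Fin n) : u 0 ≤ sortedEigs (toeplitz_isHermitian u n) j := by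
  have hle : ∀ θ ∈ Icc 0 (2 * π), u 0 ≤ u θ :=
    forall_mem_Icc_two_pi_of_symm (fun θ h => hsymm θ ▸ h)
      fun θ hθ => hu.monotoneOn (left_mem_Icc.2 pi_pos.le) hθ hθ.1
  exact le_sortedEigs hu.contDiff.continuous _
    ((NonposDim.of_nonpos (fun θ hθ => sub_nonpos.2 (hle θ hθ)) n).of_le (by omega))

lemma sortedEigs_le_node (hu : BoundedLogSlope u k) (hsymm : ∀ θ, u (2 * π - θ) = u θ)
    {j : Fin n} (hj : j + k < n) :
    sortedEigs (toeplitz_isHermitian u n) j ≤ u (node n (j + k)) := by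
  refine sortedEigs_le hu.contDiff.continuous _
    (hu.nonposDim_sub_const hsymm (node_mem_Ioo hj) ?_)
  rw [add_right_comm]
  exact nonposDim_cos_node_sub_cos hj

lemma node_le_sortedEigs (hu : BoundedLogSlope u k) (hsymm : ∀ θ, u (2 * π - θ) = u θ)
    {j : Fin n} (hj : k ≤ j) :
    u (node n (j - k)) ≤ sortedEigs (toeplitz_isHermitian u n) j := by
  have hjk : j - k < n := (Nat.sub_le _ _).trans_lt j.2
  refine le_sortedEigs hu.contDiff.continuous _
    (hu.nonposDim_const_sub hsymm (node_mem_Ioo hjk) ?_)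
  have hdim : n - j + k = n - (j - k) := by omega
  rw [hdim]
  exact nonposDim_cos_sub_cos_node hjk

lemma exists_sortedEigs_le (hu : BoundedLogSlope u k) (hsymm : ∀ θ, u (2 * π - θ) = u θ)
    (j : Fin n) : ∃ t ∈ Icc 0 π, |t - node n j| ≤ k * π * (1 / (n + 1)) ∧
      sortedEigs (toeplitz_isHermitian u n) j ≤ u t := by
  rcases lt_or_ge (j + k : ℕ) n with hj | hj
  · refine ⟨_, Ioo_subset_Icc_self (node_mem_Ioo hj), ?_, hu.sortedEigs_le_node hsymm hj⟩
    rw [node_sub_node, Nat.cast_add, add_sub_cancel_left, abs_of_nonneg (by positivity)]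
  · refine ⟨π, right_mem_Icc.2 pi_pos.le, ?_, hu.sortedEigs_le_pi hsymm j⟩
    rw [abs_of_pos (sub_pos.2 (node_lt_pi j.2))]
    have hπ : π = node n n := by
      rw [node]
      field_simp
    nth_rw 1 [hπ]
    rw [node_sub_node]
    have hj' : (n - j : ℝ) ≤ k := by
      rw [sub_le_iff_le_add']
      exact_mod_cast hj
    gcongr

lemma exists_le_sortedEigs (hu : BoundedLogSlope u k) (hsymm : ∀ θ, u (2 * π - θ) = u θ)
    (j : Fin n) : ∃ t ∈ Icc 0 π, |t - node n j| ≤ k * π * (1 / (n + 1)) ∧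
      u t ≤ sortedEigs (toeplitz_isHermitian u n) j := by
  rcases le_or_gt k j with hj | hj
  · refine ⟨_, Ioo_subset_Icc_self (node_mem_Ioo (by omega)), ?_, hu.node_le_sortedEigs hsymm hj⟩
    rw [node_sub_node, Nat.cast_sub hj, sub_sub_cancel_left, neg_mul, neg_mul, abs_neg,
      abs_of_nonneg (by positivity)]
  · refine ⟨0, left_mem_Icc.2 pi_pos.le, ?_, hu.zero_le_sortedEigs hsymm j⟩
    have hj' : (j + 1 : ℝ) ≤ k := by exact_mod_cast hj
    rw [zero_sub, abs_neg, abs_of_pos (node_pos n j), node]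
    gcongr

lemma exists_abs_sortedEigs_sub_le (hu : BoundedLogSlope u k)
    (hsymm : ∀ θ, u (2 * π - θ) = u θ) : ∃ κ > 0, ∀ (n : ℕ) (j : Fin n),
      |sortedEigs (toeplitz_isHermitian u n) j - u (node n j)| ≤ κ * (1 / (n + 1)) := by
  obtain ⟨K, hK⟩ := (hu.contDiff.contDiffOn (s := Icc 0 π)).exists_lipschitzOnWith two_ne_zero
    (convex_Icc 0 π) isCompact_Icc
  have hclose {n : ℕ} {j : Fin n} {t : ℝ} (ht : t ∈ Icc 0 π)
      (htj : |t - node n j| ≤ k * π * (1 / (n + 1))) :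
      |u t - u (node n j)| ≤ (K * (k * π) + 1) * (1 / (n + 1)) :=
    calc |u t - u (node n j)| ≤ K * |t - node n j| :=
          hK.dist_le_mul t ht _ (Ioo_subset_Icc_self (node_mem_Ioo j.2))
      _ ≤ K * (k * π * (1 / (n + 1))) := by gcongr
      _ ≤ (K * (k * π) + 1) * (1 / (n + 1)) := by
          have hh : (0 : ℝ) ≤ 1 / (n + 1) := by positivity
          linear_combination hh
  refine ⟨K * (k * π) + 1, by positivity, fun n j => abs_sub_le_iff.2 ⟨?_, ?_⟩⟩
  · obtain ⟨t, ht, htj, hle⟩ := hu.exists_sortedEigs_le hsymm j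
    exact (sub_le_sub_right hle _).trans (abs_le.1 (hclose ht htj)).2
  · obtain ⟨t, ht, htj, hle⟩ := hu.exists_le_sortedEigs hsymm j
    exact (sub_le_sub_left hle _).trans ((neg_sub _ _).symm.le.trans
      (neg_le.1 (abs_le.1 (hclose ht htj)).1))

lemma exists_of_mul_sin_le_deriv {δ : ℝ} (hu : ContDiff ℝ 2 u) (hδ : 0 < δ)
    (h : ∀ θ ∈ Ioo 0 π, δ * sin θ ≤ deriv u θ) : ∃ k, BoundedLogSlope u k := by
  obtain ⟨M, hM⟩ := isCompact_Icc.exists_bound_of_continuousOn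
    ((ContDiff.continuous_deriv_one (ContDiff.deriv' hu)).continuousOn (s := Icc 0 π))
  obtain ⟨k, hk⟩ := exists_nat_ge ((M / δ + 1) / 2)
  have hM₀ : 0 ≤ M := (norm_nonneg _).trans (hM 0 (left_mem_Icc.2 pi_pos.le))
  have hnonneg (θ : ℝ) (hθ : θ ∈ Ioo 0 π) : 0 ≤ deriv u θ :=
    (mul_pos hδ (sin_pos_of_mem_Ioo hθ)).le.trans (h θ hθ)
  refine ⟨k, hu, hnonneg, fun θ hθ => ?_⟩
  have hsin := sin_pos_of_mem_Ioo hθ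
  have hu' := hnonneg θ hθ
  calc |sin θ * deriv (deriv u) θ - cos θ * deriv u θ|
      ≤ sin θ * |deriv (deriv u) θ| + |cos θ| * deriv u θ := by
        refine (abs_sub _ _).trans_eq ?_
        rw [abs_mul, abs_mul, abs_of_pos hsin, abs_of_nonneg hu']
    _ ≤ sin θ * M + 1 * deriv u θ := by
        gcongr
        · exact hM θ (Ioo_subset_Icc_self hθ)
        · exact abs_cos_le_one θ
    _ = M / δ * (δ * sin θ) + deriv u θ := by field_simp
    _ ≤ M / δ * deriv u θ + deriv u θ := by
        gcongr
        exact h θ hθ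
    _ = (M / δ + 1) / 2 * 2 * deriv u θ := by ring
    _ ≤ k * 2 * deriv u θ := by gcongr
    _ = 2 * k * deriv u θ := by ring

end BoundedLogSlope

end Localization

section SimpleLoop

open Set

lemma exists_pos_mul_le_of_eventually {X : Type*} [TopologicalSpace X] {s : Set X}
    (hs : IsCompact s) {f g : X → ℝ} (hf : ∀ x ∈ s, 0 ≤ f x)
    (h : ∀ x ∈ s, ∃ δ > 0, ∀ᶠ y in 𝓝[s] x, δ * f y ≤ g y) :
    ∃ δ > 0, ∀ x ∈ s, δ * f x ≤ g x := by
  suffices hmain : ∃ δ > 0, ∀ x ∈ s ∩ s, δ * f x ≤ g x by rwa [inter_self] at hmain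
  refine hs.induction_on (p := fun t => ∃ δ > 0, ∀ x ∈ t ∩ s, δ * f x ≤ g x) ⟨1, by simp⟩
    (fun t₁ t₂ ht ⟨δ, hδ, hle⟩ => ⟨δ, hδ, fun x hx => hle x ⟨ht hx.1, hx.2⟩⟩) ?_ fun x hx => ?_
  · rintro t₁ t₂ ⟨δ₁, hδ₁, hle₁⟩ ⟨δ₂, hδ₂, hle₂⟩
    refine ⟨min δ₁ δ₂, lt_min hδ₁ hδ₂, ?_⟩
    rintro x ⟨hx₁ | hx₂, hx⟩
    · exact (mul_le_mul_of_nonneg_right (min_le_left _ _) (hf x hx)).trans (hle₁ x ⟨hx₁, hx⟩)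
    · exact (mul_le_mul_of_nonneg_right (min_le_right _ _) (hf x hx)).trans (hle₂ x ⟨hx₂, hx⟩)
  · obtain ⟨δ, hδ, hle⟩ := h x hx
    exact ⟨_, hle, δ, hδ, fun y hy => hy.1⟩

lemma eventually_mul_sin_le {v : ℝ → ℝ} {d : ℝ} (hv : HasDerivAt v d 0) (hv₀ : v 0 = 0)
    (hd : 0 < d) : ∀ᶠ θ in 𝓝[Icc 0 π] 0, d / 2 * sin θ ≤ v θ := by
  filter_upwards [nhdsWithin_le_nhds ((hasDerivAt_iff_isLittleO.1 hv).def (half_pos hd)),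
    self_mem_nhdsWithin] with θ hlittle hθ
  rw [hv₀, sub_zero, sub_zero, smul_eq_mul, norm_eq_abs, norm_eq_abs, abs_of_nonneg hθ.1] at hlittle
  calc d / 2 * sin θ ≤ d / 2 * θ := by
        gcongr
        exact sin_le hθ.1
    _ ≤ v θ := by linear_combination (abs_le.1 hlittle).1

lemma IsSimpleLoop.exists_mul_sin_le_deriv {α : ℝ} {f : ℝ → ℝ} (hf : IsSimpleLoop α f) :
    ∃ δ > 0, ∀ θ ∈ Icc 0 π, δ * sin θ ≤ deriv f θ := by
  have hderiv (θ : ℝ) : HasDerivAt (deriv f) (deriv (deriv f) θ) θ :=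
    (hf.smooth.differentiable_deriv_two θ).hasDerivAt
  refine exists_pos_mul_le_of_eventually isCompact_Icc (fun θ => sin_nonneg_of_mem_Icc)
    fun x hx => ?_
  rcases hx.1.eq_or_lt with rfl | hx₀
  · exact ⟨_, half_pos hf.deriv2_zero, eventually_mul_sin_le (hderiv 0) hf.deriv_zero
      hf.deriv2_zero⟩
  rcases hx.2.eq_or_lt with rfl | hxπ
  · have hreflect : HasDerivAt (fun θ => deriv f (π - θ)) (-deriv (deriv f) π) 0 :=
      HasDerivAt.comp_const_sub π 0 (by simpa only [sub_zero] using hderiv π)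
    have hmaps : Tendsto (fun θ => π - θ) (𝓝[Icc 0 π] π) (𝓝[Icc 0 π] 0) := by
      have hcont : ContinuousWithinAt (fun θ => π - θ) (Icc 0 π) π := by fun_prop
      have hmaps : MapsTo (fun θ => π - θ) (Icc 0 π) (Icc 0 π) := fun θ hθ =>
        ⟨sub_nonneg.2 hθ.2, sub_le_self _ hθ.1⟩
      simpa only [sub_self] using hcont.tendsto_nhdsWithin hmaps
    have h := hmaps.eventually (eventually_mul_sin_le hreflect (by simpa using hf.deriv_pi)
      (neg_pos.2 hf.deriv2_pi))
    simp only [sin_pi_sub, sub_sub_cancel] at h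
    exact ⟨_, half_pos (neg_pos.2 hf.deriv2_pi), h⟩
  · have hx' := half_lt_self (hf.deriv_pos x ⟨hx₀, hxπ⟩)
    refine ⟨_, half_pos (hf.deriv_pos x ⟨hx₀, hxπ⟩), ?_⟩
    filter_upwards [nhdsWithin_le_nhds ((hderiv x).continuousAt.eventually_const_lt hx')] with θ hθ
    exact (mul_le_of_le_one_right (half_pos (hf.deriv_pos x ⟨hx₀, hxπ⟩)).le
      (sin_le_one θ)).trans hθ.le

end SimpleLoop

theorem eigenvalue_first_order_general {u : ℝ → ℝ} (hu : ContDiff ℝ 2 u)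
    (hsymm : ∀ θ, u (2 * π - θ) = u θ) {δ : ℝ} (hδ : 0 < δ)
    (hderiv : ∀ θ ∈ Set.Ioo 0 π, δ * sin θ ≤ deriv u θ) :
    ∃ κ > 0, ∀ (n : ℕ) (j : Fin n),
      |sortedEigs (toeplitz_isHermitian u n) j - u (node n j)| ≤ κ * (1 / (n + 1)) :=
  let ⟨_, hk⟩ := BoundedLogSlope.exists_of_mul_sin_le_deriv hu hδ hderiv
  hk.exists_abs_sortedEigs_sub_le hsymm

open Real in
/-- First-order localization of the eigenvalues of `T_n(f + β·g)` for a constant `β > 0`: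
`λ_j(T_n(f + β g)) = f(d_{j,n}) + β g(d_{j,n}) + O(h)`. -/
theorem eigenvalue_first_order (α : ℝ) (hα : 2 ≤ α) (f g : ℝ → ℝ) (β : ℝ) (hβ : 0 < β)
    (hf : IsSimpleLoop α f) (hg : IsSimpleLoop α g)
    (hSL : IsSimpleLoop α (fun θ => f θ + β * g θ))
    (hH : ∀ n : ℕ, (toeplitz (fun θ => f θ + β * g θ) n).IsHermitian) :
    ∃ κ > (0:ℝ), ∀ (n : ℕ) (j : Fin n),
      |sortedEigs (hH n) j - f (((j:ℕ)+1) * π * (1/(n+1:ℝ)))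
          - β * g (((j:ℕ)+1) * π * (1/(n+1:ℝ)))|
        ≤ κ * (1/(n+1:ℝ)) := by
  obtain ⟨δ, hδ, hderiv⟩ := hSL.exists_mul_sin_le_deriv
  simpa only [sub_sub, node] using eigenvalue_first_order_general hSL.smooth hSL.symm hδ
    fun θ hθ => hderiv θ (Set.Ioo_subset_Icc_self hθ)
end
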